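/- arXiv:math/9809185 — 2 statements merged into one kernel-verified Lean document; each statement's English description precedes it below -/
import Mathlib

section
/- Let p ≥ 2 be an integer and let x ∈ F(p) have normal form x = x_{i₁}^{r₁}·x_{i₂}^{r₂}⋯x_{iₙ}^{rₙ}·x_{jₘ}^{-sₘ}⋯x_{j₂}^{-s₂}·x_{j₁}^{-s₁}, and set D(x) = r₁+⋯+rₙ + s₁+⋯+sₘ + iₙ + jₘ. Then D(x)/(3(p−1)) ≤ |x|_p ≤ 3·D(x). -/
open scoped BigOperators

/-- Relators of Thompson's group `F(p)`: `x_i⁻¹ x_j x_i x_{j+p-1}⁻¹` for `i < j`. -/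
def thompsonRels (p : ℕ) : Set (FreeGroup ℕ) :=
  { rel | ∃ i j : ℕ, i < j ∧
      rel = (FreeGroup.of i)⁻¹ * FreeGroup.of j * FreeGroup.of i *
        (FreeGroup.of (j + p - 1))⁻¹ }

/-- Thompson's group `F(p)`, presented with generators `x_i` (`i : ℕ`) and relations
`x_i⁻¹ · x_j · x_i = x_{j+p-1}` for `i < j`. -/
def FP (p : ℕ) : Type := PresentedGroup (thompsonRels p)

instance (p : ℕ) : Group (FP p) :=
  inferInstanceAs (Group (PresentedGroup (thompsonRels p)))

/-- The generator `x_i` of `F(p)`. -/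
def xg (p : ℕ) (i : ℕ) : FP p := PresentedGroup.of (rels := thompsonRels p) i

/-- Word length of `x : G` with respect to a set `S` of generators: the least length of a
word in elements of `S ∪ S⁻¹` whose product is `x`. -/
noncomputable def wordLength {G : Type*} [Group G] (S : Set G) (x : G) : ℕ :=
  sInf { n : ℕ | ∃ w : List G, w.length = n ∧ (∀ g ∈ w, g ∈ S ∨ g⁻¹ ∈ S) ∧ w.prod = x }

/-- The word length `|x|_p` on `F(p)`, with respect to the generators `x_0, …, x_{p-1}`. -/
noncomputable def wlen (p : ℕ) (x : FP p) : ℕ :=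
  wordLength { g : FP p | ∃ i, i < p ∧ g = xg p i } x

/-- The data of a candidate normal form
`x_{i₁}^{r₁} ⋯ x_{iₙ}^{rₙ} · x_{jₘ}^{-sₘ} ⋯ x_{j₁}^{-s₁}` in `F(p)`. -/
structure NFData (p : ℕ) where
  n : ℕ
  m : ℕ
  i : Fin n → ℕ
  r : Fin n → ℕ
  j : Fin m → ℕ
  s : Fin m → ℕ

namespace NFData

variable {p : ℕ}

/-- The element of `F(p)` represented by the normal form data, namely
`x_{i₁}^{r₁} ⋯ x_{iₙ}^{rₙ} · (x_{j₁}^{s₁} ⋯ x_{jₘ}^{sₘ})⁻¹`. -/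
def elem (d : NFData p) : FP p :=
  (List.ofFn fun k => xg p (d.i k) ^ d.r k).prod *
    ((List.ofFn fun l => xg p (d.j l) ^ d.s l).prod)⁻¹

/-- The generator with index `a` occurs in `d` (with positive or negative exponent). -/
def Occurs (d : NFData p) (a : ℕ) : Prop :=
  (∃ k, d.i k = a) ∨ (∃ l, d.j l = a)

/-- `d` is a normal form of `x ∈ F(p)`: the indices are strictly increasing, the exponents
are at least `1`, `iₙ ≠ jₘ` when both parts are nonempty, whenever a generator and its
inverse both occur one of the following `p-1` generators (or its inverse) occurs as well,
and the corresponding product equals `x`. -/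
def IsNormalFormOf (d : NFData p) (x : FP p) : Prop :=
  StrictMono d.i ∧ StrictMono d.j ∧
    (∀ k, 1 ≤ d.r k) ∧ (∀ l, 1 ≤ d.s l) ∧
    (∀ (hn : 0 < d.n) (hm : 0 < d.m),
      d.i ⟨d.n - 1, Nat.sub_lt hn Nat.one_pos⟩ ≠ d.j ⟨d.m - 1, Nat.sub_lt hm Nat.one_pos⟩) ∧
    (∀ a : ℕ, (∃ k, d.i k = a) → (∃ l, d.j l = a) →
      ∃ b : ℕ, a < b ∧ b ≤ a + p - 1 ∧ d.Occurs b) ∧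
    x = d.elem

/-- The quantity `D(x) = r₁ + ⋯ + rₙ + s₁ + ⋯ + sₘ + iₙ + jₘ` (the terms `iₙ`, `jₘ` being
omitted when `n = 0`, resp. `m = 0`). -/
def D (d : NFData p) : ℕ :=
  (∑ k, d.r k) + (∑ l, d.s l) +
    (if hn : 0 < d.n then d.i ⟨d.n - 1, Nat.sub_lt hn Nat.one_pos⟩ else 0) +
    (if hm : 0 < d.m then d.j ⟨d.m - 1, Nat.sub_lt hm Nat.one_pos⟩ else 0)

end NFData

/-- The tail sum `r_k + r_{k+1} + ⋯ + r_n`. -/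
def tailSum {n : ℕ} (r : Fin n → ℕ) (k : Fin n) : ℕ :=
  ∑ l ∈ Finset.univ.filter (fun l => k ≤ l), r l
/-- `N(x)` associated to a normal form in `F(2)` (Theorem 3):
the maximum of `i_k + r_k + ⋯ + r_n + 1` and `j_l + s_l + ⋯ + s_m + 1`. -/
def NFData.N2 (d : NFData 2) : ℕ :=
  max (Finset.univ.sup fun k => d.i k + tailSum d.r k + 1)
      (Finset.univ.sup fun l => d.j l + tailSum d.s l + 1)

/-- `N(x)` associated to a normal form in `F(p)` (Theorem 6):
the maximum of `⌊i_k/(p-1)⌋ + r_k + ⋯ + r_n + 1` and `⌊j_l/(p-1)⌋ + s_l + ⋯ + s_m + 1`. -/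
def NFData.Ngen {p : ℕ} (d : NFData p) : ℕ :=
  max (Finset.univ.sup fun k => d.i k / (p - 1) + tailSum d.r k + 1)
      (Finset.univ.sup fun l => d.j l / (p - 1) + tailSum d.s l + 1)

/-- `N(x) = max { i_k + r_k + ⋯ + r_n + 1 }` for a positive word (Proposition 2). -/
def posN {n : ℕ} (i r : Fin n → ℕ) : ℕ :=
  Finset.univ.sup fun k => i k + tailSum r k + 1

/-- `N₁(x) = max { ⌊i_k/(p-1)⌋ + r_k + ⋯ + r_n + 1 }` (Proposition 4). -/
def posN1 (p : ℕ) {n : ℕ} (i r : Fin n → ℕ) : ℕ :=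
  Finset.univ.sup fun k => i k / (p - 1) + tailSum r k + 1

/-- `N₂(x) = max { i_k + (p-1)(r_k + ⋯ + r_n) + 1 }` (Proposition 5). -/
def posN2 (p : ℕ) {n : ℕ} (i r : Fin n → ℕ) : ℕ :=
  Finset.univ.sup fun k => i k + (p - 1) * tailSum r k + 1

/-- `x ∈ ℤ[1/p]`. -/
def IsPAdicRational (p : ℕ) (x : ℝ) : Prop :=
  ∃ (a : ℤ) (n : ℕ), x = (a : ℝ) / (p : ℝ) ^ n

/-- Thompson's group `F(p)` realized as a set of permutations of `ℝ`: orientation-preserving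
piecewise-linear homeomorphisms of `[0,1]` (extended by the identity outside `[0,1]`) with
finitely many breakpoints, all in `ℤ[1/p]`, whose slopes are integer powers of `p`. -/
def PLSet (p : ℕ) : Set (Equiv.Perm ℝ) :=
  { f | Monotone f ∧ (∀ t : ℝ, t ≤ 0 → f t = t) ∧ (∀ t : ℝ, 1 ≤ t → f t = t) ∧
    ∃ B : Finset ℝ, (∀ b ∈ B, IsPAdicRational p b) ∧
      ∀ t : ℝ, t ∉ (B : Set ℝ) →
        ∃ ε > (0 : ℝ), ∃ (k : ℤ) (c : ℝ), ∀ s : ℝ, |s - t| < ε → f s = (p : ℝ) ^ k * s + c }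

/-- The map `Φ_p` on homeomorphisms: `(Φ_p f)(t) = t` for `t ≤ 1 - 1/p`, and
`(Φ_p f)(t) = ((p-1) + f(pt - (p-1)))/p` for `t ≥ 1 - 1/p`. -/
noncomputable def PhiMap (p : ℕ) (f : ℝ → ℝ) : ℝ → ℝ := fun t =>
  if t ≤ 1 - 1 / (p : ℝ) then t
  else (((p : ℝ) - 1) + f ((p : ℝ) * t - ((p : ℝ) - 1))) / (p : ℝ)

/-- The piecewise-linear homeomorphism `f_i` of `ℝ` corresponding to the generator `x_i`
of `F(p)`. -/
noncomputable def fgen (p : ℕ) (i : ℕ) : ℝ → ℝ := fun t =>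
  if t ≤ (i : ℝ) then t
  else if t ≤ (i : ℝ) + 1 then (p : ℝ) * t + (i : ℝ) * (1 - (p : ℝ))
  else t + (p : ℝ) - 1

/- ## Basic relations -/

lemma fp_rel (q i j : ℕ) (h : i < j) :
    (xg (q+1) i)⁻¹ * xg (q+1) j * xg (q+1) i = xg (q+1) (j+q) := by
  have h1 : (PresentedGroup.mk (thompsonRels (q+1))) ((FreeGroup.of i)⁻¹ * FreeGroup.of j * FreeGroup.of i *
        (FreeGroup.of (j + (q+1) - 1))⁻¹) = 1 := by
    apply PresentedGroup.one_of_mem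
    exact ⟨i, j, h, rfl⟩
  rw [map_mul, map_inv, mul_inv_eq_one] at h1
  have h2 : j + (q+1) - 1 = j + q := by omega
  rw [h2, map_mul, map_mul, map_inv] at h1
  exact h1

lemma fp_swap (q i j : ℕ) (h : i < j) :
    xg (q+1) j * xg (q+1) i = xg (q+1) i * xg (q+1) (j+q) := by
  rw [← fp_rel q i j h]; group

lemma fp_conj (q a : ℕ) (ha : 0 < a) (k : ℕ) :
    xg (q+1) a * (xg (q+1) 0) ^ k = (xg (q+1) 0) ^ k * xg (q+1) (a + q * k) := by
  induction k with
  | zero => simp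
  | succ k ih =>
    rw [pow_succ, ← mul_assoc, ih, mul_assoc, fp_swap q 0 _ (by omega), mul_assoc]
    rw [mul_add, mul_one, add_assoc]

def evp (q : ℕ) (l : List ℕ) : FP (q+1) := (l.map (xg (q+1))).prod

lemma evp_nil (q : ℕ) : evp q [] = 1 := by simp [evp]
lemma evp_cons (q a : ℕ) (l : List ℕ) : evp q (a :: l) = xg (q+1) a * evp q l := by simp [evp]
lemma evp_append (q : ℕ) (l l' : List ℕ) : evp q (l ++ l') = evp q l * evp q l' := by simp [evp]
lemma evp_replicate (q k a : ℕ) : evp q (List.replicate k a) = xg (q+1) a ^ k := by simp [evp]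

lemma evp_shift (q a : ℕ) (l : List ℕ) (h : ∀ b ∈ l, a < b) :
    evp q l * xg (q+1) a = xg (q+1) a * evp q (l.map (· + q)) := by
  induction l with
  | nil => simp [evp]
  | cons b l ih =>
    simp only [List.map_cons, evp_cons]
    rw [mul_assoc, ih (fun c hc => h c (by simp [hc])), ← mul_assoc, fp_swap q a b (h b (by simp)),
      mul_assoc]

lemma evp_shift_pow (q a k : ℕ) (l : List ℕ) (h : ∀ b ∈ l, a < b) :
    evp q l * xg (q+1) a ^ k = xg (q+1) a ^ k * evp q (l.map (· + q * k)) := by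
  induction k with
  | zero => simp
  | succ k ih =>
    rw [pow_succ, ← mul_assoc, ih, mul_assoc, evp_shift, mul_assoc]
    · congr 2
      simp only [List.map_map]
      congr 1
      apply List.map_congr_left
      intro c _
      simp [mul_add, add_assoc]
    · intro b hb
      simp only [List.mem_map] at hb
      obtain ⟨c, hc, rfl⟩ := hb
      have := h c hc
      omega

/- ## Upper bound: representability -/

def RepLen (q n : ℕ) (g : FP (q+1)) : Prop :=
  ∃ w : List (FP (q+1)), w.length ≤ n ∧
    (∀ g ∈ w, g ∈ { g : FP (q+1) | ∃ i, i < q+1 ∧ g = xg (q+1) i } ∨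
      g⁻¹ ∈ { g : FP (q+1) | ∃ i, i < q+1 ∧ g = xg (q+1) i }) ∧ w.prod = g

lemma RepLen.mul {q m n : ℕ} {g h : FP (q+1)} (hg : RepLen q m g) (hh : RepLen q n h) :
    RepLen q (m+n) (g*h) := by
  obtain ⟨w, h1, h2, h3⟩ := hg
  obtain ⟨v, k1, k2, k3⟩ := hh
  refine ⟨w ++ v, by simp; omega, ?_, by simp [h3, k3]⟩
  intro x hx
  rcases List.mem_append.1 hx with hx | hx
  · exact h2 x hx
  · exact k2 x hx

lemma RepLen.inv {q m : ℕ} {g : FP (q+1)} (hg : RepLen q m g) : RepLen q m g⁻¹ := by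
  obtain ⟨w, h1, h2, h3⟩ := hg
  refine ⟨(w.map (·⁻¹)).reverse, by simpa using h1, ?_, by rw [← h3, List.prod_inv_reverse]⟩
  intro x hx
  simp only [List.mem_reverse, List.mem_map] at hx
  obtain ⟨y, hy, rfl⟩ := hx
  rw [inv_inv]
  exact (h2 y hy).symm

lemma RepLen.mono {q m n : ℕ} {g : FP (q+1)} (hg : RepLen q m g) (h : m ≤ n) : RepLen q n g := by
  obtain ⟨w, h1, h2, h3⟩ := hg
  exact ⟨w, h1.trans h, h2, h3⟩

lemma RepLen.one (q : ℕ) : RepLen q 0 1 := ⟨[], by simp, by simp, by simp⟩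

lemma RepLen.gen (q i : ℕ) (h : i < q+1) : RepLen q 1 (xg (q+1) i) :=
  ⟨[xg (q+1) i], by simp, by
    intro g hg
    left
    exact ⟨i, h, by simpa using hg⟩, by simp⟩

lemma RepLen.pow (q k : ℕ) : RepLen q k (xg (q+1) 0 ^ k) := by
  induction k with
  | zero => simpa using RepLen.one q
  | succ k ih => rw [pow_succ]; exact ih.mul (RepLen.gen q 0 (by omega))

lemma exists_conj (q : ℕ) (hq : 0 < q) (c : ℕ) : ∃ b < q+1,
    xg (q+1) c = (xg (q+1) 0 ^ ((c-1)/q))⁻¹ * xg (q+1) b * xg (q+1) 0 ^ ((c-1)/q) := by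
  rcases Nat.eq_zero_or_pos c with rfl | hc
  · exact ⟨0, by omega, by simp⟩
  · refine ⟨(c-1) % q + 1, by have := Nat.mod_lt (c-1) hq; omega, ?_⟩
    rw [mul_assoc, fp_conj q _ (by omega), inv_mul_cancel_left]
    congr 1
    have := Nat.mod_add_div (c-1) q
    omega

lemma upper_aux (q : ℕ) (hq : 0 < q) (l : List ℕ) : ∀ (k K : ℕ), l.Pairwise (· ≤ ·) → k ≤ K →
    (∀ c ∈ l, k ≤ (c-1)/q ∧ (c-1)/q ≤ K) →
    RepLen q (l.length + (K-k)) (xg (q+1) 0 ^ k * evp q l * (xg (q+1) 0 ^ K)⁻¹) := by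
  induction l with
  | nil =>
    intro k K _ hk _
    have : xg (q+1) 0 ^ k * evp q [] * (xg (q+1) 0 ^ K)⁻¹ = (xg (q+1) 0 ^ (K-k))⁻¹ := by
      obtain ⟨t, rfl⟩ := Nat.exists_eq_add_of_le hk
      rw [evp_nil, Nat.add_sub_cancel_left, pow_add, (Commute.pow_pow_self _ k t).eq]
      group
    rw [this]
    exact (RepLen.pow q _).inv.mono (by simp)
  | cons c l ih =>
    intro k K hs hk hc
    obtain ⟨b, hb, hcb⟩ := exists_conj q hq c
    have h1 := hc c (by simp)
    rw [List.pairwise_cons] at hs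
    have h2 := ih ((c-1)/q) K hs.2 h1.2 (fun e he => ⟨Nat.div_le_div_right (by
      have := hs.1 e he; omega), (hc e (by simp [he])).2⟩)
    have h3 := (((RepLen.pow q ((c-1)/q - k)).inv).mul (RepLen.gen q b hb)).mul h2
    generalize (c-1)/q = t at *
    obtain ⟨u, rfl⟩ := Nat.exists_eq_add_of_le h1.1
    have e : xg (q+1) 0 ^ k * evp q (c::l) * (xg (q+1) 0 ^ K)⁻¹ =
      (xg (q + 1) 0 ^ (k + u - k))⁻¹ * xg (q + 1) b * (xg (q + 1) 0 ^ (k+u) * evp q l * (xg (q + 1) 0 ^ K)⁻¹) := by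
      rw [evp_cons, hcb, Nat.add_sub_cancel_left]
      have : xg (q+1) 0 ^ (k+u) = xg (q+1) 0 ^ u * xg (q+1) 0 ^ k := by rw [add_comm k u, pow_add]
      rw [this]; group
    rw [e]
    refine h3.mono ?_
    simp only [List.length_cons]
    omega

lemma upper_list (q : ℕ) (hq : 0 < q) (l : List ℕ) (M : ℕ) (hs : l.Pairwise (· ≤ ·))
    (hM : ∀ c ∈ l, c ≤ M) : RepLen q (l.length + 2 * M) (evp q l) := by
  have h := upper_aux q hq l 0 M hs (by omega) (fun c hc => ⟨Nat.zero_le _,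
    (Nat.div_le_self _ _).trans (by have := hM c hc; omega)⟩)
  have h2 := h.mul (RepLen.pow q M)
  simp only [pow_zero, one_mul, inv_mul_cancel_right] at h2
  exact h2.mono (by omega)

/- ## The PL action -/

def plEquiv (q i : ℕ) : Equiv.Perm ℚ where
  toFun t := if t ≤ i then t else if t ≤ i + 1 then i + (q+1) * (t - i) else t + q
  invFun t := if t ≤ i then t else if t ≤ i + (q+1) then i + (t - i)/(q+1) else t - q
  left_inv t := by
    have hq : (0:ℚ) ≤ q := by positivity
    have hq1 : (0:ℚ) < q + 1 := by positivity
    dsimp only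
    split_ifs with h1 h2 h3 h4 h5 h6
    · rfl
    · exfalso; push Not at h1; nlinarith
    · field_simp; ring
    · exfalso; apply h4; nlinarith
    · exfalso; linarith
    · exfalso; linarith
    · ring
  right_inv t := by
    have hq : (0:ℚ) ≤ q := by positivity
    have hq1 : (0:ℚ) < q + 1 := by positivity
    dsimp only
    split_ifs with h1 h2 h3 h4 h5 h6
    · rfl
    · exfalso
      have : 0 < (t - i)/(q+1) := div_pos (by linarith) hq1
      linarith
    · field_simp; ring
    · exfalso; apply h4
      have : (t - i)/(q+1) ≤ 1 := by rw [div_le_one hq1]; linarith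
      linarith
    · exfalso; linarith
    · exfalso; linarith
    · ring

lemma plEquiv_rel (q i j : ℕ) (h : i < j) :
    plEquiv q i * plEquiv q j = plEquiv q (j+q) * plEquiv q i := by
  ext t
  have hq : (0:ℚ) ≤ q := by positivity
  have hij : (i:ℚ) + 1 ≤ j := by exact_mod_cast h
  simp only [Equiv.Perm.mul_apply, plEquiv, Equiv.coe_fn_mk]
  push_cast
  split_ifs <;> first | rfl | (exfalso; nlinarith) | (ring)

def plHom (q : ℕ) : FP (q+1) →* Equiv.Perm ℚ :=
  PresentedGroup.toGroup (rels := thompsonRels (q+1)) (f := fun i => (plEquiv q i)⁻¹) (by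
    rintro r ⟨i, j, h, rfl⟩
    have h2 : j + (q+1) - 1 = j + q := by omega
    rw [h2]
    simp only [map_mul, map_inv, FreeGroup.lift_apply_of, inv_inv]
    have h3 : plEquiv q (j+q) = plEquiv q i * plEquiv q j * (plEquiv q i)⁻¹ := by
      rw [plEquiv_rel q i j h]; group
    rw [h3]; group)

lemma plHom_xg (q i : ℕ) : plHom q (xg (q+1) i) = (plEquiv q i)⁻¹ :=
  PresentedGroup.toGroup.of _

/-- `g` fixes `a` and has slope `(q+1)^e` to the right of `a`. -/
def Germ (q a : ℕ) (e : ℤ) (g : Equiv.Perm ℚ) : Prop :=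
  ∃ ε : ℚ, 0 < ε ∧ ∀ t : ℚ, 0 ≤ t → t ≤ ε → g (a + t) = a + ((q:ℚ)+1)^e * t

lemma Germ.mul {q a : ℕ} {e f : ℤ} {g h : Equiv.Perm ℚ} (hg : Germ q a e g) (hh : Germ q a f h) :
    Germ q a (e+f) (g*h) := by
  obtain ⟨ε, he, h1⟩ := hg
  obtain ⟨δ, hd, h2⟩ := hh
  have hq1 : (0:ℚ) < q + 1 := by positivity
  have hpos : (0:ℚ) < ((q:ℚ)+1)^f := by positivity
  refine ⟨min δ (ε / ((q:ℚ)+1)^f), by positivity, ?_⟩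
  intro t ht0 ht
  rw [Equiv.Perm.mul_apply, h2 t ht0 (ht.trans (min_le_left _ _)), h1 _ (by positivity),
    zpow_add₀ hq1.ne', mul_assoc]
  have := ht.trans (min_le_right _ _)
  rw [le_div_iff₀ hpos] at this
  linarith

lemma Germ.inv {q a : ℕ} {e : ℤ} {g : Equiv.Perm ℚ} (hg : Germ q a e g) : Germ q a (-e) g⁻¹ := by
  obtain ⟨ε, he, h1⟩ := hg
  have hq1 : (0:ℚ) < q + 1 := by positivity
  have hpos : (0:ℚ) < ((q:ℚ)+1)^e := by positivity
  refine ⟨((q:ℚ)+1)^e * ε, by positivity, ?_⟩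
  intro t ht0 ht
  rw [Equiv.Perm.inv_eq_iff_eq, h1, zpow_neg]
  · field_simp
  · positivity
  · rw [zpow_neg, inv_mul_le_iff₀ hpos]; exact ht

lemma Germ.one (q a : ℕ) : Germ q a 0 1 := ⟨1, one_pos, by simp⟩

lemma Germ.unique {q a : ℕ} (hq : 0 < q) {e f : ℤ} {g : Equiv.Perm ℚ} (hg : Germ q a e g)
    (hh : Germ q a f g) : e = f := by
  obtain ⟨ε, he, h1⟩ := hg
  obtain ⟨δ, hd, h2⟩ := hh
  have h0 : 0 < min ε δ := by positivity
  have h3 := h1 _ h0.le (min_le_left _ _)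
  rw [h2 _ h0.le (min_le_right _ _)] at h3
  have h4 := mul_right_cancel₀ h0.ne' (add_left_cancel h3)
  have hq1 : (0:ℚ) < q := by exact_mod_cast hq
  exact (zpow_right_injective₀ (by linarith) (by linarith) h4).symm

lemma Germ.self (q a : ℕ) : Germ q a 1 (plEquiv q a) := by
  refine ⟨1, one_pos, ?_⟩
  intro t h0 h1
  simp only [plEquiv, Equiv.coe_fn_mk, zpow_one]
  split_ifs with h2 h3
  · have : t = 0 := by linarith
    simp [this]
  · ring
  · exfalso; linarith

lemma Germ.gt (q a b : ℕ) (h : a < b) : Germ q a 0 (plEquiv q b) := by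
  refine ⟨1, one_pos, ?_⟩
  intro t h0 h1
  have hab : (a:ℚ) + 1 ≤ b := by exact_mod_cast h
  simp only [plEquiv, Equiv.coe_fn_mk, zpow_zero]
  rw [if_pos (by linarith)]
  ring

lemma germ_evp (q a : ℕ) (l : List ℕ) (h : ∀ b ∈ l, a ≤ b) :
    Germ q a (-(l.count a : ℤ)) (plHom q (evp q l)) := by
  induction l with
  | nil => simpa [evp_nil] using Germ.one q a
  | cons b l ih =>
    have h1 := ih (fun c hc => h c (by simp [hc]))
    rw [evp_cons, map_mul, plHom_xg]
    rcases (h b (by simp)).eq_or_lt with rfl | hb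
    · have := (Germ.self q a).inv.mul h1
      convert this using 1
      simp
    · have := (Germ.gt q a b hb).inv.mul h1
      convert this using 1
      simp [List.count_cons, hb.ne']

lemma count_eq (q a : ℕ) (hq : 0 < q) (P N P' N' : List ℕ)
    (hP : ∀ b ∈ P, a ≤ b) (hN : ∀ b ∈ N, a ≤ b) (hP' : ∀ b ∈ P', a ≤ b) (hN' : ∀ b ∈ N', a ≤ b)
    (h : evp q P * (evp q N)⁻¹ = evp q P' * (evp q N')⁻¹) :
    P.count a + N'.count a = P'.count a + N.count a := by
  have h1 := (germ_evp q a P hP).mul (germ_evp q a N hN).inv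
  have h2 := (germ_evp q a P' hP').mul (germ_evp q a N' hN').inv
  rw [← map_inv, ← map_mul] at h1 h2
  rw [h] at h1
  have := h1.unique hq h2
  omega

/- ## Uniqueness of normal forms -/

def NormalPair (q : ℕ) (P N : List ℕ) : Prop :=
  P.Pairwise (· ≤ ·) ∧ N.Pairwise (· ≤ ·) ∧
    ∀ a ∈ P, a ∈ N → ∃ b, a < b ∧ b ≤ a + q ∧ (b ∈ P ∨ b ∈ N)

lemma NormalPair.symm {q : ℕ} {P N : List ℕ} (h : NormalPair q P N) : NormalPair q N P :=
  ⟨h.2.1, h.1, fun a ha hb => by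
    obtain ⟨b, h1, h2, h3⟩ := h.2.2 a hb ha
    exact ⟨b, h1, h2, h3.symm⟩⟩

lemma NormalPair.tail {q a : ℕ} {P N : List ℕ} (h : NormalPair q (a :: P) N) : NormalPair q P N := by
  obtain ⟨h1, h2, h3⟩ := h
  rw [List.pairwise_cons] at h1
  refine ⟨h1.2, h2, ?_⟩
  intro c hc hc'
  obtain ⟨b, k1, k2, k3⟩ := h3 c (by simp [hc]) hc'
  refine ⟨b, k1, k2, ?_⟩
  rcases k3 with k3 | k3
  · rcases List.mem_cons.1 k3 with rfl | k3
    · have := h1.1 c hc; omega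
    · exact Or.inl k3
  · exact Or.inr k3

lemma NormalPair.shift {q : ℕ} {P N : List ℕ} (h : NormalPair q P N) (k : ℕ) :
    NormalPair q (P.map (· + k)) (N.map (· + k)) := by
  obtain ⟨h1, h2, h3⟩ := h
  refine ⟨?_, ?_, ?_⟩
  · rw [List.pairwise_map]; exact h1.imp (by intros; omega)
  · rw [List.pairwise_map]; exact h2.imp (by intros; omega)
  · intro a ha hb
    simp only [List.mem_map] at ha hb
    obtain ⟨c, hc, rfl⟩ := ha
    obtain ⟨c', hc', e⟩ := hb
    obtain rfl : c' = c := by omega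
    obtain ⟨b, k1, k2, k3⟩ := h3 c' hc hc'
    refine ⟨b + k, by omega, by omega, ?_⟩
    rcases k3 with k3 | k3
    · exact Or.inl (List.mem_map.2 ⟨b, k3, rfl⟩)
    · exact Or.inr (List.mem_map.2 ⟨b, k3, rfl⟩)

/-- A sorted list with minimum at least `a` splits off its copies of `a`. -/
lemma split_min (a : ℕ) (l : List ℕ) (hs : l.Pairwise (· ≤ ·)) (h : ∀ b ∈ l, a ≤ b) :
    ∃ l', l = List.replicate (l.count a) a ++ l' ∧ ∀ b ∈ l', a < b := by
  induction l with
  | nil => exact ⟨[], by simp, by simp⟩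
  | cons c l ih =>
    rw [List.pairwise_cons] at hs
    rcases (h c (by simp)).eq_or_lt with rfl | hc
    · obtain ⟨l', h1, h2⟩ := ih hs.2 hs.1
      refine ⟨l', ?_, h2⟩
      rw [List.count_cons_self, List.replicate_succ, List.cons_append, ← h1]
    · refine ⟨c :: l, ?_, ?_⟩
      · rw [List.count_eq_zero_of_not_mem]
        · simp
        · intro hm
          rcases List.mem_cons.1 hm with rfl | hm
          · omega
          · have := hs.1 a hm; omega
      · intro b hb
        rcases List.mem_cons.1 hb with rfl | hb
        · exact hc
        · exact hc.trans_le (hs.1 b hb)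

lemma NormalPair.drop_replicate {q a : ℕ} {P N : List ℕ} (k : ℕ)
    (h : NormalPair q (List.replicate k a ++ P) N) : NormalPair q P N := by
  induction k with
  | zero => simpa using h
  | succ k ih =>
    rw [List.replicate_succ, List.cons_append] at h
    exact ih h.tail

/-- The contradictory configuration in the uniqueness proof. -/
lemma unique_contra (q : ℕ) (hq : 0 < q) (n : ℕ)
    (IH : ∀ P N P' N' : List ℕ, P.length + N.length + P'.length + N'.length < n →
      NormalPair q P N → NormalPair q P' N' →
      evp q P * (evp q N)⁻¹ = evp q P' * (evp q N')⁻¹ → P = P' ∧ N = N')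
    (P N P' N' : List ℕ) (hn : P.length + N.length + P'.length + N'.length = n)
    (h : NormalPair q P N) (h' : NormalPair q P' N')
    (e : evp q P * (evp q N)⁻¹ = evp q P' * (evp q N')⁻¹) (a : ℕ)
    (hP : ∀ b ∈ P, a ≤ b) (hN : ∀ b ∈ N, a ≤ b) (hP' : ∀ b ∈ P', a < b) (hN' : ∀ b ∈ N', a < b)
    (ha : a ∈ P ∨ a ∈ N) : False := by
  have hc := count_eq q a hq P N P' N' hP hN (fun b hb => (hP' b hb).le) (fun b hb => (hN' b hb).le) e
  have z1 : P'.count a = 0 := List.count_eq_zero_of_not_mem (fun hm => (hP' a hm).ne rfl)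
  have z2 : N'.count a = 0 := List.count_eq_zero_of_not_mem (fun hm => (hN' a hm).ne rfl)
  obtain ⟨P1, e1, g1⟩ := split_min a P h.1 hP
  obtain ⟨N1, e2, g2⟩ := split_min a N h.2.1 hN
  have hcc : N.count a = P.count a := by omega
  rw [hcc] at e2
  have haP : 0 < P.count a := by
    rcases ha with ha | ha
    · exact List.count_pos_iff.2 ha
    · rw [← hcc]; exact List.count_pos_iff.2 ha
  obtain ⟨b, hb1, hb2, hb3⟩ := h.2.2 a (List.count_pos_iff.1 haP) (List.count_pos_iff.1 (by omega))
  generalize P.count a = k at e1 e2 haP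
  clear hc hcc
  subst e1 e2
  have nn := (h.drop_replicate k).symm.drop_replicate k |>.symm
  have ee : evp q P1 * (evp q N1)⁻¹ =
      evp q (P'.map (· + q * k)) * (evp q (N'.map (· + q * k)))⁻¹ := by
    have s1 : evp q (P'.map (· + q * k)) = (xg (q+1) a ^ k)⁻¹ * (evp q P' * xg (q+1) a ^ k) := by
      rw [evp_shift_pow q a k P' hP', inv_mul_cancel_left]
    have s2 : evp q (N'.map (· + q * k)) = (xg (q+1) a ^ k)⁻¹ * (evp q N' * xg (q+1) a ^ k) := by
      rw [evp_shift_pow q a k N' hN', inv_mul_cancel_left]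
    rw [evp_append, evp_append, evp_replicate] at e
    rw [s1, s2]
    calc evp q P1 * (evp q N1)⁻¹ = (xg (q+1) a ^ k)⁻¹ * (xg (q + 1) a ^ k * evp q P1 * (xg (q + 1) a ^ k * evp q N1)⁻¹) * xg (q+1) a ^ k := by group
      _ = _ := by rw [e]; group
  have := IH P1 N1 _ _ (by
    simp only [List.length_append, List.length_replicate, List.length_map] at hn ⊢
    omega) nn (h'.shift (q*k)) ee
  obtain ⟨r1, r2⟩ := this
  have hqk : q ≤ q * k := Nat.le_mul_of_pos_right q haP
  simp only [List.mem_append, List.mem_replicate] at hb3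
  have : b ∈ P1 ∨ b ∈ N1 := by
    rcases hb3 with (hb3 | hb3) | (hb3 | hb3)
    · omega
    · exact Or.inl hb3
    · omega
    · exact Or.inr hb3
  rw [r1, r2] at this
  simp only [List.mem_map] at this
  rcases this with ⟨c, hc, hc'⟩ | ⟨c, hc, hc'⟩
  · have := hP' c hc; omega
  · have := hN' c hc; omega

lemma exists_min4 (P N P' N' : List ℕ) (h : ¬ (P = [] ∧ N = [] ∧ P' = [] ∧ N' = [])) :
    ∃ a, (∀ b ∈ P, a ≤ b) ∧ (∀ b ∈ N, a ≤ b) ∧ (∀ b ∈ P', a ≤ b) ∧ (∀ b ∈ N', a ≤ b) ∧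
      ((a ∈ P ∨ a ∈ N) ∨ (a ∈ P' ∨ a ∈ N')) := by
  classical
  have hex : ∃ a, ((a ∈ P ∨ a ∈ N) ∨ (a ∈ P' ∨ a ∈ N')) := by
    by_contra hcon
    push Not at hcon
    apply h
    refine ⟨?_, ?_, ?_, ?_⟩ <;> rw [List.eq_nil_iff_forall_not_mem] <;> intro a <;> have := hcon a <;> tauto
  refine ⟨Nat.find hex, ?_, ?_, ?_, ?_, Nat.find_spec hex⟩ <;> intro b hb <;>
    apply Nat.find_min' <;> tauto

lemma head_of_min (a : ℕ) (l : List ℕ) (hs : l.Pairwise (· ≤ ·)) (h : ∀ b ∈ l, a ≤ b) (ha : a ∈ l) :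
    ∃ l', l = a :: l' := by
  cases l with
  | nil => simp at ha
  | cons c l =>
    rw [List.pairwise_cons] at hs
    have h1 := h c (by simp)
    rcases List.mem_cons.1 ha with rfl | ha
    · exact ⟨l, rfl⟩
    · have := hs.1 a ha
      obtain rfl : c = a := by omega
      exact ⟨l, rfl⟩

lemma unique_nf (q : ℕ) (hq : 0 < q) (n : ℕ) : ∀ P N P' N' : List ℕ,
    P.length + N.length + P'.length + N'.length = n →
      NormalPair q P N → NormalPair q P' N' →
      evp q P * (evp q N)⁻¹ = evp q P' * (evp q N')⁻¹ → P = P' ∧ N = N' := by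
  induction n using Nat.strong_induction_on with
  | _ n ih =>
  intro P N P' N' hn h h' e
  have IH : ∀ P N P' N' : List ℕ, P.length + N.length + P'.length + N'.length < n →
      NormalPair q P N → NormalPair q P' N' →
      evp q P * (evp q N)⁻¹ = evp q P' * (evp q N')⁻¹ → P = P' ∧ N = N' :=
    fun P N P' N' hlt => ih _ hlt P N P' N' rfl
  by_cases hemp : P = [] ∧ N = [] ∧ P' = [] ∧ N' = []
  · obtain ⟨rfl, rfl, rfl, rfl⟩ := hemp
    exact ⟨rfl, rfl⟩
  obtain ⟨a, m1, m2, m3, m4, ha⟩ := exists_min4 P N P' N' hemp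
  by_cases c1 : a ∈ P ∧ a ∈ P'
  · obtain ⟨P1, rfl⟩ := head_of_min a P h.1 m1 c1.1
    obtain ⟨P1', rfl⟩ := head_of_min a P' h'.1 m3 c1.2
    have := IH P1 N P1' N' (by simp at hn; omega) h.tail h'.tail (by
      rw [evp_cons, evp_cons, mul_assoc, mul_assoc] at e
      exact mul_left_cancel e)
    exact ⟨by rw [this.1], this.2⟩
  by_cases c2 : a ∈ N ∧ a ∈ N'
  · obtain ⟨N1, rfl⟩ := head_of_min a N h.2.1 m2 c2.1
    obtain ⟨N1', rfl⟩ := head_of_min a N' h'.2.1 m4 c2.2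
    have := IH P N1 P' N1' (by simp at hn; omega) h.symm.tail.symm h'.symm.tail.symm (by
      rw [evp_cons, evp_cons, mul_inv_rev, mul_inv_rev, ← mul_assoc, ← mul_assoc] at e
      exact mul_right_cancel e)
    exact ⟨this.1, by rw [this.2]⟩
  exfalso
  have hc := count_eq q a hq P N P' N' m1 m2 m3 m4 e
  have key : ∀ l : List ℕ, (∀ b ∈ l, a ≤ b) → a ∉ l → ∀ b ∈ l, a < b := by
    intro l hl hal b hb
    rcases (hl b hb).eq_or_lt with rfl | h
    · exact absurd hb hal
    · exact h
  have p1 : a ∈ P ↔ 0 < P.count a := List.count_pos_iff.symm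
  have p2 : a ∈ N ↔ 0 < N.count a := List.count_pos_iff.symm
  have p3 : a ∈ P' ↔ 0 < P'.count a := List.count_pos_iff.symm
  have p4 : a ∈ N' ↔ 0 < N'.count a := List.count_pos_iff.symm
  rcases ha with ha | ha
  · refine unique_contra q hq n IH P N P' N' hn h h' e a m1 m2 (key _ m3 ?_) (key _ m4 ?_) ha <;>
      (rw [p1, p3] at c1; rw [p2, p4] at c2; rw [p1, p2] at ha; first | rw [p3] | rw [p4]) <;> omega
  · refine unique_contra q hq n IH P' N' P N (by omega) h' h e.symm a m3 m4 (key _ m1 ?_) (key _ m2 ?_) ha <;>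
      (rw [p1, p3] at c1; rw [p2, p4] at c2; rw [p3, p4] at ha; first | rw [p1] | rw [p2]) <;> omega



/- ## Reduction of arbitrary words to normal form -/

/-- Every letter `a` of the word satisfies `a + q * (number of letters from it on) ≤ B`. -/
def Bdd (q B : ℕ) : List ℕ → Prop
  | [] => True
  | a :: l => a + q * (l.length + 1) ≤ B ∧ Bdd q B l

lemma Bdd.mono {q B B' : ℕ} (h : B ≤ B') {l : List ℕ} (hl : Bdd q B l) : Bdd q B' l := by
  induction l with
  | nil => trivial
  | cons a l ih => exact ⟨hl.1.trans h, ih hl.2⟩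

lemma Bdd.mem {q B : ℕ} {l : List ℕ} (hl : Bdd q B l) (a : ℕ) (ha : a ∈ l) : a + q ≤ B := by
  induction l with
  | nil => simp at ha
  | cons b l ih =>
    rcases List.mem_cons.1 ha with rfl | ha
    · have := hl.1
      rw [mul_add] at this
      omega
    · exact ih hl.2 ha

lemma insert_sorted (q B : ℕ) (l : List ℕ) : ∀ a : ℕ, l.Pairwise (· ≤ ·) → Bdd q B (a :: l) →
    ∃ l' : List ℕ, l'.Pairwise (· ≤ ·) ∧ l'.length = l.length + 1 ∧
      evp q l' = xg (q+1) a * evp q l ∧ Bdd q B l' ∧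
      ∀ m, m ≤ a → (∀ c ∈ l, m ≤ c) → ∀ c ∈ l', m ≤ c := by
  induction l with
  | nil =>
    intro a _ hB
    refine ⟨[a], by simp, rfl, by rw [evp_cons], hB, ?_⟩
    intro m hm _ c hc
    simp at hc; omega
  | cons b l ih =>
    intro a hs hB
    rcases Nat.lt_or_ge b a with hba | hba
    · have hs' := List.pairwise_cons.1 hs
      obtain ⟨h1, h2, h3⟩ := hB
      simp only [List.length_cons, mul_add, mul_one] at h1 h2
      obtain ⟨l', k1, k2, k3, k4, k5⟩ := ih (a+q) hs'.2 ⟨by simp only [mul_add, mul_one]; omega, h3⟩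
      refine ⟨b :: l', ?_, by simp [k2], ?_, ⟨?_, k4⟩, ?_⟩
      · exact List.pairwise_cons.2 ⟨k5 b (by omega) hs'.1, k1⟩
      · rw [evp_cons, evp_cons, k3, ← mul_assoc, ← mul_assoc, fp_swap q b a hba]
      · rw [k2]; simp only [mul_add, mul_one]; omega
      · intro m hm hl c hc
        rcases List.mem_cons.1 hc with rfl | hc
        · exact hl c (by simp)
        · exact k5 m (by omega) (fun c hc => hl c (by simp [hc])) c hc
    · refine ⟨a :: b :: l, ?_, by simp, by rw [evp_cons], hB, ?_⟩
      · refine List.pairwise_cons.2 ⟨?_, hs⟩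
        intro c hc
        rcases List.mem_cons.1 hc with rfl | hc
        · exact hba
        · exact hba.trans ((List.pairwise_cons.1 hs).1 c hc)
      · intro m hm hl c hc
        rcases List.mem_cons.1 hc with rfl | hc
        · exact hm
        · exact hl c hc

lemma sort_word (q B : ℕ) (l : List ℕ) (hB : Bdd q B l) :
    ∃ l' : List ℕ, l'.Pairwise (· ≤ ·) ∧ l'.length = l.length ∧ evp q l' = evp q l ∧ Bdd q B l' := by
  induction l with
  | nil => exact ⟨[], by simp, rfl, rfl, trivial⟩
  | cons a l ih =>
    obtain ⟨l', h1, h2, h3, h4⟩ := ih hB.2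
    obtain ⟨l'', k1, k2, k3, k4, _⟩ := insert_sorted q B l' a h1 ⟨by rw [h2]; exact hB.1, h4⟩
    exact ⟨l'', k1, by simp [k2, h2], by rw [k3, h3, evp_cons], k4⟩

lemma Bdd.unshift {q B : ℕ} {l : List ℕ} (h : Bdd q B (l.map (· + q))) : Bdd q B l := by
  induction l with
  | nil => trivial
  | cons a l ih =>
    obtain ⟨h1, h2⟩ := h
    refine ⟨?_, ih h2⟩
    simp only [List.length_map] at h1
    omega

/-- Removing a letter `a` on the right when none of `a+1, …, a+q` occurs. -/
lemma remove_letter (q B a : ℕ) (l : List ℕ) (hs : l.Pairwise (· ≤ ·)) (hB : Bdd q B l) (ha : a ∈ l)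
    (hno : ∀ b, a < b → b ≤ a + q → b ∉ l) :
    ∃ l' : List ℕ, l'.Pairwise (· ≤ ·) ∧ l.length = l'.length + 1 ∧
      evp q l = evp q l' * xg (q+1) a ∧ Bdd q B l' ∧
      ∀ m, m ≤ a → (∀ c ∈ l, m ≤ c) → ∀ c ∈ l', m ≤ c := by
  induction l with
  | nil => simp at ha
  | cons c l ih =>
    have hs' := List.pairwise_cons.1 hs
    by_cases hal : a ∈ l
    · obtain ⟨l', k1, k2, k3, k4, k5⟩ := ih hs'.2 hB.2 hal
        (fun b h1 h2 h3 => hno b h1 h2 (by simp [h3]))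
      refine ⟨c :: l', List.pairwise_cons.2 ⟨k5 c (hs'.1 a hal) hs'.1, k1⟩, by simp [k2], ?_,
        ⟨?_, k4⟩, ?_⟩
      · rw [evp_cons, evp_cons, k3, mul_assoc]
      · have := hB.1
        rw [k2] at this
        simp only [mul_add, mul_one] at this ⊢
        omega
      · intro m hm hl d hd
        rcases List.mem_cons.1 hd with rfl | hd
        · exact hl d (by simp)
        · exact k5 m hm (fun c hc => hl c (by simp [hc])) d hd
    · obtain rfl : a = c := by
        rcases List.mem_cons.1 ha with h | h
        · exact h
        · exact absurd h hal
      have hgt : ∀ b ∈ l, a + q < b := by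
        intro b hb
        by_contra hcon
        have h1 := hs'.1 b hb
        have h2 : a ≠ b := by rintro rfl; exact hal hb
        exact hno b (by omega) (by omega) (by simp [hb])
      have hmap : l = (l.map (· - q)).map (· + q) := by
        rw [List.map_map]
        conv_lhs => rw [← List.map_id l]
        apply List.map_congr_left
        intro b hb
        have := hgt b hb
        simp only [Function.comp, id]
        omega
      refine ⟨l.map (· - q), ?_, by simp, ?_, ?_, ?_⟩
      · rw [List.pairwise_map]; exact hs'.2.imp (by intros; omega)
      · rw [evp_shift, ← hmap, evp_cons]
        intro b hb
        simp only [List.mem_map] at hb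
        obtain ⟨d, hd, rfl⟩ := hb
        have := hgt d hd
        omega
      · apply Bdd.unshift
        rw [← hmap]
        exact hB.2
      · intro m hm _ b hb
        simp only [List.mem_map] at hb
        obtain ⟨d, hd, rfl⟩ := hb
        have := hgt d hd
        omega

lemma reduce_nf (q B n : ℕ) : ∀ P N : List ℕ, P.length + N.length = n →
    P.Pairwise (· ≤ ·) → N.Pairwise (· ≤ ·) → Bdd q B P → Bdd q B N →
    ∃ P' N', NormalPair q P' N' ∧ Bdd q B P' ∧ Bdd q B N' ∧ P'.length + N'.length ≤ n ∧
      evp q P' * (evp q N')⁻¹ = evp q P * (evp q N)⁻¹ := by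
  induction n using Nat.strong_induction_on with
  | _ n ih =>
  intro P N hn hP hN bP bN
  by_cases h : NormalPair q P N
  · exact ⟨P, N, h, bP, bN, hn.le, rfl⟩
  · have : ∃ a, a ∈ P ∧ a ∈ N ∧ ∀ b, a < b → b ≤ a + q → b ∉ P ∧ b ∉ N := by
      by_contra hcon
      apply h
      refine ⟨hP, hN, ?_⟩
      intro a h1 h2
      by_contra hc
      apply hcon
      refine ⟨a, h1, h2, ?_⟩
      intro b h3 h4
      by_contra h5
      apply hc
      exact ⟨b, h3, h4, by tauto⟩
    obtain ⟨a, a1, a2, a3⟩ := this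
    obtain ⟨P1, k1, k2, k3, k4, _⟩ := remove_letter q B a P hP bP a1 (fun b h1 h2 => (a3 b h1 h2).1)
    obtain ⟨N1, l1, l2, l3, l4, _⟩ := remove_letter q B a N hN bN a2 (fun b h1 h2 => (a3 b h1 h2).2)
    obtain ⟨P', N', r1, r2, r3, r4, r5⟩ := ih _ (by omega) P1 N1 rfl k1 l1 k4 l4
    refine ⟨P', N', r1, r2, r3, by omega, ?_⟩
    rw [r5, k3, l3]; group

/-- Moving `x_a` to the left through the inverse of a positive word. -/
lemma move_left (q B : ℕ) (N : List ℕ) : ∀ a : ℕ, Bdd q B N →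
    (∃ N', N'.length + 1 = N.length ∧ Bdd q (B+q) N' ∧ (evp q N)⁻¹ * xg (q+1) a = (evp q N')⁻¹) ∨
    (∃ a' N', N'.length = N.length ∧ Bdd q (B+q) N' ∧ a' ≤ a + q * N.length ∧
      (evp q N)⁻¹ * xg (q+1) a = xg (q+1) a' * (evp q N')⁻¹) := by
  induction N with
  | nil =>
    intro a _
    right
    exact ⟨a, [], rfl, trivial, by simp, by simp [evp_nil]⟩
  | cons b N ih =>
    intro a hB
    obtain ⟨h1, h2⟩ := hB
    rcases lt_trichotomy b a with hba | rfl | hba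
    · have e : (evp q (b :: N))⁻¹ * xg (q+1) a = (evp q N)⁻¹ * xg (q+1) (a+q) * (xg (q+1) b)⁻¹ := by
        rw [evp_cons, ← fp_rel q b a hba]; group
      rcases ih (a+q) h2 with ⟨N', k1, k2, k3⟩ | ⟨a', N', k1, k2, k3, k4⟩
      · left
        refine ⟨b :: N', by simp [k1], ⟨?_, k2⟩, ?_⟩
        · rw [k1]; rw [mul_add] at h1; omega
        · rw [e, k3, evp_cons]; group
      · right
        refine ⟨a', b :: N', by simp [k1], ⟨by rw [k1]; omega, k2⟩, ?_, ?_⟩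
        · simp only [List.length_cons, mul_add]; omega
        · rw [e, k4, evp_cons]; group
    · left
      refine ⟨N, by simp, h2.mono (by omega), ?_⟩
      rw [evp_cons]; group
    · have e : (evp q (b :: N))⁻¹ * xg (q+1) a = (evp q N)⁻¹ * xg (q+1) a * (xg (q+1) (b+q))⁻¹ := by
        rw [evp_cons, ← fp_rel q a b hba]; group
      rcases ih a h2 with ⟨N', k1, k2, k3⟩ | ⟨a', N', k1, k2, k3, k4⟩
      · left
        refine ⟨(b+q) :: N', by simp [k1], ⟨?_, k2⟩, ?_⟩
        · rw [k1]; rw [mul_add] at h1; omega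
        · rw [e, k3, evp_cons]; group
      · right
        refine ⟨a', (b+q) :: N', by simp [k1], ⟨by rw [k1]; omega, k2⟩, ?_, ?_⟩
        · simp only [List.length_cons, mul_add]; omega
        · rw [e, k4, evp_cons]; group

lemma Bdd.append_singleton {q B a : ℕ} {l : List ℕ} (h : Bdd q B l) (ha : a + q ≤ B + q) :
    Bdd q (B+q) (l ++ [a]) := by
  induction l with
  | nil => exact ⟨by simpa using ha, trivial⟩
  | cons b l ih =>
    refine ⟨?_, ih h.2⟩
    have := h.1
    change b + q * ((l ++ [a]).length + 1) ≤ B + q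
    simp only [List.length_append, List.length_singleton, mul_add] at this ⊢
    omega

lemma word_frac (q : ℕ) (w : List (FP (q+1)))
    (hw : ∀ g ∈ w, g ∈ { g : FP (q+1) | ∃ i, i < q+1 ∧ g = xg (q+1) i } ∨
      g⁻¹ ∈ { g : FP (q+1) | ∃ i, i < q+1 ∧ g = xg (q+1) i }) :
    ∃ P N : List ℕ, P.length + N.length ≤ w.length ∧ Bdd q (q * (w.length + 1)) P ∧
      Bdd q (q * (w.length + 1)) N ∧ w.prod = evp q P * (evp q N)⁻¹ := by
  induction w using List.reverseRecOn with
  | nil => exact ⟨[], [], by simp, trivial, trivial, by simp [evp_nil]⟩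
  | append_singleton w g ih =>
    obtain ⟨P, N, h1, h2, h3, h4⟩ := ih (fun g hg => hw g (by simp [hg]))
    have hB : q * ((w ++ [g]).length + 1) = q * (w.length + 1) + q := by
      simp only [List.length_append, List.length_singleton]; ring
    rw [hB, List.prod_append, List.prod_singleton, List.length_append, List.length_singleton, h4]
    have hmul : ∀ m, m ≤ w.length → q * m ≤ q * w.length := fun m hm => Nat.mul_le_mul_left q hm
    rcases hw g (by simp) with ⟨i, hi, rfl⟩ | ⟨i, hi, hg⟩
    · rcases move_left q _ N i h3 with ⟨N', k1, k2, k3⟩ | ⟨a', N', k1, k2, k3, k4⟩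
      · exact ⟨P, N', by omega, h2.mono (by omega), k2, by rw [mul_assoc, k3]⟩
      · refine ⟨P ++ [a'], N', by simp; omega, h2.append_singleton ?_, k2, ?_⟩
        · have := hmul N.length (by omega)
          rw [mul_add]; omega
        · rw [mul_assoc, k4, evp_append, evp_cons, evp_nil, mul_one, mul_assoc]
    · refine ⟨P, i :: N, by simp; omega, h2.mono (by omega), ⟨?_, h3.mono (by omega)⟩, ?_⟩
      · have := hmul N.length (by omega)
        rw [mul_add, mul_add]; omega
      · rw [evp_cons, ← hg]; group

/-- The lower bound, on the level of lists. -/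
lemma lower_list (q : ℕ) (hq : 0 < q) (w : List (FP (q+1)))
    (hw : ∀ g ∈ w, g ∈ { g : FP (q+1) | ∃ i, i < q+1 ∧ g = xg (q+1) i } ∨
      g⁻¹ ∈ { g : FP (q+1) | ∃ i, i < q+1 ∧ g = xg (q+1) i })
    (P N : List ℕ) (h : NormalPair q P N) (e : w.prod = evp q P * (evp q N)⁻¹) :
    P.length + N.length ≤ w.length ∧ (∀ a ∈ P, a ≤ q * w.length) ∧ (∀ a ∈ N, a ≤ q * w.length) := by
  obtain ⟨P1, N1, h1, h2, h3, h4⟩ := word_frac q w hw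
  obtain ⟨P2, k1, k2, k3, k4⟩ := sort_word q _ P1 h2
  obtain ⟨N2, l1, l2, l3, l4⟩ := sort_word q _ N1 h3
  obtain ⟨P3, N3, r1, r2, r3, r4, r5⟩ := reduce_nf q _ _ P2 N2 rfl k1 l1 k4 l4
  obtain ⟨rfl, rfl⟩ := unique_nf q hq _ P3 N3 P N rfl r1 h (by rw [r5, k3, l3, ← h4, e])
  refine ⟨by omega, ?_, ?_⟩
  · intro a ha
    have := r2.mem a ha
    rw [mul_add] at this; omega
  · intro a ha
    have := r3.mem a ha
    rw [mul_add] at this; omega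

/- ## From normal form data to lists -/

def expand {n : ℕ} (i r : Fin n → ℕ) : List ℕ :=
  (List.ofFn fun k => List.replicate (r k) (i k)).flatten

lemma mem_expand {n : ℕ} (i r : Fin n → ℕ) (hr : ∀ k, 1 ≤ r k) (a : ℕ) :
    a ∈ expand i r ↔ ∃ k, i k = a := by
  simp only [expand, List.mem_flatten, List.mem_ofFn]
  constructor
  · rintro ⟨l, ⟨k, rfl⟩, h⟩
    exact ⟨k, (List.mem_replicate.1 h).2.symm⟩
  · rintro ⟨k, rfl⟩
    exact ⟨_, ⟨k, rfl⟩, List.mem_replicate.2 ⟨by have := hr k; omega, rfl⟩⟩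

lemma length_expand {n : ℕ} (i r : Fin n → ℕ) : (expand i r).length = ∑ k, r k := by
  simp [expand, List.length_flatten, List.map_ofFn, List.sum_ofFn, Function.comp_def]

lemma evp_expand (q : ℕ) {n : ℕ} (i r : Fin n → ℕ) :
    evp q (expand i r) = (List.ofFn fun k => xg (q+1) (i k) ^ r k).prod := by
  simp [expand, evp, List.map_flatten, List.prod_flatten, List.map_ofFn, Function.comp_def]

lemma sorted_expand {n : ℕ} (i r : Fin n → ℕ) (hi : StrictMono i) :
    (expand i r).Pairwise (· ≤ ·) := by
  rw [expand, List.pairwise_flatten]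
  constructor
  · intro l hl
    obtain ⟨k, rfl⟩ := List.mem_ofFn.1 hl
    rw [List.pairwise_replicate]
    right; exact le_rfl
  · rw [List.pairwise_ofFn]
    intro a b hab x hx y hy
    rw [(List.mem_replicate.1 hx).2, (List.mem_replicate.1 hy).2]
    exact (hi hab).le

def topIdx {n : ℕ} (i : Fin n → ℕ) : ℕ :=
  if hn : 0 < n then i ⟨n - 1, Nat.sub_lt hn Nat.one_pos⟩ else 0

lemma le_topIdx {n : ℕ} (i : Fin n → ℕ) (hi : StrictMono i) (k : Fin n) : i k ≤ topIdx i := by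
  have hn : 0 < n := k.pos
  rw [topIdx, dif_pos hn]
  apply hi.monotone
  rw [Fin.le_def]
  have := k.isLt
  simp only
  omega

lemma topIdx_le {n : ℕ} (i : Fin n → ℕ) (B : ℕ) (h : ∀ k, i k ≤ B) : topIdx i ≤ B := by
  rw [topIdx]
  split_ifs
  · exact h _
  · exact Nat.zero_le _

/-- Theorem 1. If `x ∈ F(p)` has normal form
`x_{i₁}^{r₁} ⋯ x_{iₙ}^{rₙ} · x_{jₘ}^{-sₘ} ⋯ x_{j₁}^{-s₁}` and
`D(x) = r₁ + ⋯ + rₙ + s₁ + ⋯ + sₘ + iₙ + jₘ`, then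
`D(x)/(3(p-1)) ≤ |x|_p ≤ 3·D(x)`. -/
theorem statement0 (p : ℕ) (hp : 2 ≤ p) (x : FP p) (d : NFData p)
    (hd : d.IsNormalFormOf x) :
    (d.D : ℝ) / (3 * ((p : ℝ) - 1)) ≤ (wlen p x : ℝ) ∧
      (wlen p x : ℝ) ≤ 3 * (d.D : ℝ) := by
  obtain ⟨q, rfl⟩ : ∃ q, p = q + 1 := ⟨p - 1, by omega⟩
  have hq : 0 < q := by omega
  obtain ⟨hi, hj, hr, hs, _, hocc, hx⟩ := hd
  have hD : d.D = (∑ k, d.r k) + (∑ l, d.s l) + topIdx d.i + topIdx d.j := rfl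
  have hN : NormalPair q (expand d.i d.r) (expand d.j d.s) := by
    refine ⟨sorted_expand _ _ hi, sorted_expand _ _ hj, ?_⟩
    intro a ha hb
    obtain ⟨b, h1, h2, h3⟩ := hocc a ((mem_expand _ _ hr a).1 ha) ((mem_expand _ _ hs a).1 hb)
    refine ⟨b, h1, by omega, ?_⟩
    rw [mem_expand _ _ hr, mem_expand _ _ hs]
    exact h3
  have he : x = evp q (expand d.i d.r) * (evp q (expand d.j d.s))⁻¹ := by
    rw [hx, evp_expand, evp_expand]; rfl
  have hup : RepLen q (3 * d.D) x := by
    have u1 := upper_list q hq (expand d.i d.r) (topIdx d.i) (sorted_expand _ _ hi) (by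
      intro c hc
      obtain ⟨k, rfl⟩ := (mem_expand _ _ hr c).1 hc
      exact le_topIdx _ hi k)
    have u2 := upper_list q hq (expand d.j d.s) (topIdx d.j) (sorted_expand _ _ hj) (by
      intro c hc
      obtain ⟨k, rfl⟩ := (mem_expand _ _ hs c).1 hc
      exact le_topIdx _ hj k)
    rw [length_expand] at u1 u2
    rw [he]
    exact (u1.mul u2.inv).mono (by rw [hD]; omega)
  obtain ⟨w0, hw1, hw2, hw3⟩ := hup
  have hmem := Nat.sInf_mem (s := { n : ℕ | ∃ w : List (FP (q+1)), w.length = n ∧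
    (∀ g ∈ w, g ∈ { g : FP (q+1) | ∃ i, i < q+1 ∧ g = xg (q+1) i } ∨
      g⁻¹ ∈ { g : FP (q+1) | ∃ i, i < q+1 ∧ g = xg (q+1) i }) ∧ w.prod = x })
    ⟨_, w0, rfl, hw2, hw3⟩
  have hle : wlen (q+1) x ≤ w0.length := Nat.sInf_le ⟨w0, rfl, hw2, hw3⟩
  change wlen (q+1) x ∈ _ at hmem
  obtain ⟨w, v1, v2, v3⟩ := hmem
  obtain ⟨m1, m2, m3⟩ := lower_list q hq w v2 _ _ hN (v3.trans he)
  rw [v1] at m1 m2 m3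
  rw [length_expand, length_expand] at m1
  have t1 := topIdx_le d.i _ (fun k => m2 _ ((mem_expand _ _ hr _).2 ⟨k, rfl⟩))
  have t2 := topIdx_le d.j _ (fun k => m3 _ ((mem_expand _ _ hs _).2 ⟨k, rfl⟩))
  have t3 : wlen (q+1) x ≤ q * wlen (q+1) x := Nat.le_mul_of_pos_left _ hq
  have t4 : d.D ≤ 3 * (q * wlen (q+1) x) := by omega
  constructor
  · have hq' : (0:ℝ) < q := by exact_mod_cast hq
    have t5 : (d.D : ℝ) ≤ 3 * (q * wlen (q+1) x) := by exact_mod_cast t4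
    push_cast
    rw [add_sub_cancel_right, div_le_iff₀ (by positivity)]
    linarith
  · have : wlen (q+1) x ≤ 3 * d.D := hle.trans hw1
    exact_mod_cast this
end

section
/- Let p ≥ 2 and k ≥ 1 be integers, and realize the groups F(p) and F(p^k) as groups of piecewise-linear homeomorphisms of [0,1]. Then F(p^k) is a subgroup of F(p), and the inclusion is a quasi-isometric embedding: for every finite generating set S of F(p^k) and every finite generating set T of F(p) there is a constant C ≥ 1 such that for all x ∈ F(p^k), (1/C)·ℓ_S(x) ≤ ℓ_T(x) ≤ C·ℓ_S(x), where ℓ_S and ℓ_T denote word length with respect to S and T respectively. -/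
open scoped BigOperators

namespace PLT

/-- `f` maps the standard `q`-adic interval `I` affinely onto the standard interval `J`. -/
def Aff (q : ℕ) (f : Equiv.Perm ℝ) (I J : ℕ × ℕ) : Prop :=
  I.1 < q ^ I.2 ∧ J.1 < q ^ J.2 ∧
    ∀ t : ℝ, 0 ≤ t → t ≤ 1 → f (((I.1 : ℝ) + t) / (q : ℝ) ^ I.2) = ((J.1 : ℝ) + t) / (q : ℝ) ^ J.2

/-- Standard intervals on which `f` is not affine onto a standard interval. -/
def Bad (q : ℕ) (f : Equiv.Perm ℝ) : Set (ℕ × ℕ) :=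
  {I | I.1 < q ^ I.2 ∧ ¬ ∃ J, Aff q f I J}

theorem Aff.inv {q : ℕ} {f : Equiv.Perm ℝ} {I J : ℕ × ℕ} (h : Aff q f I J) : Aff q f⁻¹ J I := by
  refine ⟨h.2.1, h.1, fun t h0 h1 => ?_⟩
  rw [← h.2.2 t h0 h1]; simp

theorem Aff.comp {q : ℕ} {f g : Equiv.Perm ℝ} {I J K : ℕ × ℕ} (h : Aff q f I J)
    (h' : Aff q g J K) : Aff q (g * f) I K := by
  refine ⟨h.1, h'.2.1, fun t h0 h1 => ?_⟩
  rw [Equiv.Perm.mul_apply, h.2.2 t h0 h1, h'.2.2 t h0 h1]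

theorem Aff.uniq {q : ℕ} (hq : 2 ≤ q) {f : Equiv.Perm ℝ} {I J K : ℕ × ℕ} (h : Aff q f I J)
    (h' : Aff q f I K) : J = K := by
  have hq0 : (0 : ℝ) < q := by positivity
  have a0 := (h.2.2 0 le_rfl zero_le_one).symm.trans (h'.2.2 0 le_rfl zero_le_one)
  have a1 := (h.2.2 1 zero_le_one le_rfl).symm.trans (h'.2.2 1 zero_le_one le_rfl)
  obtain ⟨m, e⟩ := J
  obtain ⟨m', e'⟩ := K
  simp only [add_zero, add_div] at a0 a1
  rw [a0] at a1
  have a2 : (1 : ℝ) / (q : ℝ) ^ e = 1 / (q : ℝ) ^ e' := by linarith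
  have a3 : (q : ℝ) ^ e = (q : ℝ) ^ e' := by
    simpa using a2
  have a4 : e = e' := by
    have : q ^ e = q ^ e' := by exact_mod_cast a3
    exact Nat.pow_right_injective hq this
  subst a4
  have : (m : ℝ) = m' := by
    have := (pow_pos hq0 e).ne'
    field_simp at a0
    exact a0
  have : m = m' := by exact_mod_cast this
  rw [this]

theorem Aff.uniq' {q : ℕ} (hq : 2 ≤ q) {f : Equiv.Perm ℝ} {I J K : ℕ × ℕ} (h : Aff q f I K)
    (h' : Aff q f J K) : I = J := Aff.uniq hq h.inv h'.inv

theorem Aff.child {q : ℕ} (hq : 2 ≤ q) {f : Equiv.Perm ℝ} {n d m e i : ℕ} (h : Aff q f (n, d) (m, e))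
    (hi : i < q) : Aff q f (n * q + i, d + 1) (m * q + i, e + 1) := by
  have hq0 : (0 : ℝ) < q := by positivity
  obtain ⟨h1, h2, h3⟩ := h
  simp only at h1 h2 h3
  refine ⟨?_, ?_, fun t ht0 ht1 => ?_⟩
  · simp only; rw [pow_succ]; nlinarith
  · simp only; rw [pow_succ]; nlinarith
  · have hi' : (i : ℝ) + 1 ≤ q := by exact_mod_cast hi
    have := h3 ((i + t) / q) (by positivity) (by rw [div_le_one hq0]; linarith)
    have e1 : ∀ n d : ℕ, ((n : ℝ) + (i + t) / q) / (q : ℝ) ^ d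
        = (((n * q + i : ℕ) : ℝ) + t) / (q : ℝ) ^ (d + 1) := by
      intro n d
      rw [pow_succ]; push_cast; field_simp; ring
    rw [e1, e1] at this
    exact this

theorem Aff.of_affine {q : ℕ} (hq : 2 ≤ q) {f : Equiv.Perm ℝ} {n d m e : ℕ} (hn : n < q ^ d)
    (hm : m < q ^ e) (σ c : ℝ) (hσ : σ * q ^ e = q ^ d)
    (hc : σ * (n / (q : ℝ) ^ d) + c = m / (q : ℝ) ^ e)
    (h : ∀ y : ℝ, (n : ℝ) / q ^ d ≤ y → y ≤ (n + 1) / q ^ d → f y = σ * y + c) :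
    Aff q f (n, d) (m, e) := by
  have hq0 : (0 : ℝ) < q := by positivity
  have hd := pow_pos hq0 d
  have he := pow_pos hq0 e
  refine ⟨hn, hm, fun t h0 h1 => ?_⟩
  simp only
  rw [h _ (by gcongr; linarith) (by gcongr), add_div, mul_add, add_right_comm, hc, add_div]
  congr 1
  rw [← hσ]
  have : σ ≠ 0 := by rintro rfl; simp at hσ; exact hd.ne hσ
  field_simp

theorem Aff.slope {q : ℕ} (hq : 2 ≤ q) {f : Equiv.Perm ℝ} {n d m e : ℕ} (h : Aff q f (n, d) (m, e))
    {y : ℝ} (h1 : (n : ℝ) / q ^ d ≤ y) (h2 : y ≤ (n + 1) / q ^ d) :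
    f y = (q : ℝ) ^ d / q ^ e * (y - n / q ^ d) + m / q ^ e := by
  have hq0 : (0 : ℝ) < q := by positivity
  have hd := pow_pos hq0 d
  have he := pow_pos hq0 e
  have := h.2.2 (y * q ^ d - n) (by rw [div_le_iff₀ hd] at h1; linarith)
    (by rw [le_div_iff₀ hd] at h2; linarith)
  simp only at this
  rw [show ((n : ℝ) + (y * q ^ d - n)) / q ^ d = y by field_simp; ring] at this
  rw [this]; field_simp; ring

/-- ancestors of bad nodes are bad -/
theorem good_desc {q : ℕ} (hq : 2 ≤ q) {f : Equiv.Perm ℝ} {d : ℕ} (j : ℕ) : ∀ n : ℕ,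
    (∃ J, Aff q f (n / q ^ j, d) J) → ∃ J, Aff q f (n, d + j) J := by
  induction j with
  | zero => intro n h; simpa using h
  | succ j ih =>
    intro n h
    have : n / q ^ (j + 1) = (n / q) / q ^ j := by
      rw [Nat.div_div_eq_div_mul, pow_succ, mul_comm]
    rw [this] at h
    obtain ⟨⟨m, e⟩, hJ⟩ := ih _ h
    have := hJ.child hq (Nat.mod_lt n (by omega : q > 0))
    rw [Nat.div_add_mod'] at this
    exact ⟨_, this⟩

theorem bad_anc {q : ℕ} (hq : 2 ≤ q) {f : Equiv.Perm ℝ} {d j n : ℕ}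
    (h : (n, d + j) ∈ Bad q f) : (n / q ^ j, d) ∈ Bad q f := by
  refine ⟨?_, fun h' => h.2 (good_desc hq j n h')⟩
  have := h.1
  simp only at this ⊢
  rw [pow_add] at this
  exact Nat.div_lt_of_lt_mul (by rw [mul_comm]; exact this)

theorem bad_root {q : ℕ} (hq : 2 ≤ q) {f : Equiv.Perm ℝ} {d n : ℕ}
    (h : (n, d) ∈ Bad q f) : (0, 0) ∈ Bad q f := by
  have h1 : (n, 0 + d) ∈ Bad q f := by simpa using h
  have := bad_anc hq h1
  rwa [Nat.div_eq_of_lt h.1] at this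

theorem not_bad {q : ℕ} {f : Equiv.Perm ℝ} {I : ℕ × ℕ} (hI : I.1 < q ^ I.2) :
    I ∉ Bad q f ↔ ∃ J, Aff q f I J := by
  simp [Bad, hI]

/-- The action of `f` on standard intervals. -/
noncomputable def act (q : ℕ) (f : Equiv.Perm ℝ) (I : ℕ × ℕ) : ℕ × ℕ :=
  open Classical in if h : ∃ J, Aff q f I J then h.choose else I

theorem act_eq {q : ℕ} (hq : 2 ≤ q) {f : Equiv.Perm ℝ} {I J : ℕ × ℕ} (h : Aff q f I J) :
    act q f I = J := by
  have h' : ∃ J, Aff q f I J := ⟨J, h⟩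
  rw [act, dif_pos h']
  exact Aff.uniq hq h'.choose_spec h

theorem bad_mul {q : ℕ} {f g : Equiv.Perm ℝ} {I : ℕ × ℕ} (h : I ∈ Bad q (g * f)) :
    I ∈ Bad q f ∨ ∃ J ∈ Bad q g, Aff q f I J := by
  by_cases hI : I ∈ Bad q f
  · exact Or.inl hI
  · right
    obtain ⟨J, hJ⟩ := (not_bad h.1).1 hI
    refine ⟨J, ⟨hJ.2.1, ?_⟩, hJ⟩
    rintro ⟨K, hK⟩
    exact h.2 ⟨K, hJ.comp hK⟩

/-- `Bad` as a finset -/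
noncomputable def Bf (q : ℕ) (f : Equiv.Perm ℝ) : Finset (ℕ × ℕ) :=
  open Classical in if h : (Bad q f).Finite then h.toFinset else ∅

theorem mem_Bf {q : ℕ} {f : Equiv.Perm ℝ} (h : (Bad q f).Finite) {I : ℕ × ℕ} :
    I ∈ Bf q f ↔ I ∈ Bad q f := by
  rw [Bf, dif_pos h]; simp

theorem bad_mul_sub {q : ℕ} (hq : 2 ≤ q) {f g : Equiv.Perm ℝ} :
    Bad q (g * f) ⊆ Bad q f ∪ act q f⁻¹ '' Bad q g := by
  intro I hI
  rcases bad_mul hI with h | ⟨J, hJ, hIJ⟩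
  · exact Or.inl h
  · exact Or.inr ⟨J, hJ, act_eq hq hIJ.inv⟩

theorem bad_mul_finite {q : ℕ} (hq : 2 ≤ q) {f g : Equiv.Perm ℝ} (hf : (Bad q f).Finite)
    (hg : (Bad q g).Finite) : (Bad q (g * f)).Finite :=
  (hf.union (hg.image _)).subset (bad_mul_sub hq)

theorem card_mul {q : ℕ} (hq : 2 ≤ q) {f g : Equiv.Perm ℝ} (hf : (Bad q f).Finite)
    (hg : (Bad q g).Finite) : (Bf q (g * f)).card ≤ (Bf q g).card + (Bf q f).card := by
  classical
  have : Bf q (g * f) ⊆ Bf q f ∪ (Bf q g).image (act q f⁻¹) := by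
    intro I hI
    rw [mem_Bf (bad_mul_finite hq hf hg)] at hI
    simp only [Finset.mem_union, Finset.mem_image, mem_Bf hf, mem_Bf hg]
    exact bad_mul_sub hq hI
  calc _ ≤ _ := Finset.card_le_card this
    _ ≤ _ := Finset.card_union_le _ _
    _ ≤ _ := by have := Finset.card_image_le (s := Bf q g) (f := act q f⁻¹); omega

theorem move_bad_inv {q : ℕ} {f x : Equiv.Perm ℝ} (hx : Bad q x ⊆ Bad q f) :
    Bad q (f * x⁻¹)⁻¹ ⊆ Bad q f⁻¹ := by
  intro I hI
  rw [mul_inv_rev, inv_inv] at hI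
  rcases bad_mul hI with h | ⟨J, hJ, hIJ⟩
  · exact h
  · have h := hx hJ
    have := hIJ.inv
    rw [inv_inv] at this
    exact absurd ⟨_, this⟩ h.2

theorem move_sum {q : ℕ} (hq : 2 ≤ q) {f x : Equiv.Perm ℝ} (hf : (Bad q f).Finite)
    (hx : (Bad q x).Finite) (hx' : (Bad q x⁻¹).Finite) (hs : Bad q x ⊆ Bad q f)
    (w : ℕ × ℕ → ℕ) (hw : ∀ I J, Aff q x I J → w J = w I) :
    ∑ I ∈ Bf q (f * x⁻¹), w I + ∑ I ∈ Bf q x, w I ≤ ∑ I ∈ Bf q f, w I + ∑ I ∈ Bf q x⁻¹, w I := by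
  classical
  have hsub : Bf q x ⊆ Bf q f := fun I hI => (mem_Bf hf).2 (hs ((mem_Bf hx).1 hI))
  have h1 : Bf q (f * x⁻¹) ⊆ Bf q x⁻¹ ∪ (Bf q f \ Bf q x).image (act q x) := by
    intro I hI
    rw [mem_Bf (bad_mul_finite hq hx' hf)] at hI
    rcases bad_mul hI with h | ⟨J, hJ, hIJ⟩
    · exact Finset.mem_union_left _ ((mem_Bf hx').2 h)
    · refine Finset.mem_union_right _ (Finset.mem_image.2 ⟨J, ?_, ?_⟩)
      · rw [Finset.mem_sdiff, mem_Bf hf, mem_Bf hx]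
        refine ⟨hJ, fun h => h.2 ⟨I, ?_⟩⟩
        simpa using hIJ.inv
      · exact act_eq hq (by simpa using hIJ.inv)
  have h2 : ∑ I ∈ (Bf q f \ Bf q x).image (act q x), w I ≤ ∑ I ∈ Bf q f \ Bf q x, w I := by
    refine (Finset.sum_image_le_of_nonneg (fun _ _ => Nat.zero_le _)).trans ?_
    refine Finset.sum_le_sum fun I hI => ?_
    rw [Finset.mem_sdiff, mem_Bf hf, mem_Bf hx] at hI
    obtain ⟨J, hJ⟩ := (not_bad hI.1.1).1 hI.2
    rw [act_eq hq hJ, hw _ _ hJ]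
  have h3 := Finset.sum_sdiff (f := w) hsub
  have h4 := Finset.sum_le_sum_of_subset (f := w) h1
  have h5 := Finset.sum_union_inter (f := w) (s₁ := Bf q x⁻¹) (s₂ := (Bf q f \ Bf q x).image (act q x))
  omega


theorem PL_cont {q : ℕ} {f : Equiv.Perm ℝ} (hf : f ∈ PLSet q) : Continuous f :=
  hf.1.continuous_of_surjective f.surjective

theorem PL_zero {q : ℕ} {f : Equiv.Perm ℝ} (hf : f ∈ PLSet q) : f 0 = 0 := hf.2.1 0 le_rfl

theorem PL_one {q : ℕ} {f : Equiv.Perm ℝ} (hf : f ∈ PLSet q) : f 1 = 1 := hf.2.2.1 1 le_rfl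

theorem PL_strict {q : ℕ} {f : Equiv.Perm ℝ} (hf : f ∈ PLSet q) : StrictMono f :=
  hf.1.strictMono_of_injective f.injective

theorem PL_piece {q : ℕ} {f : ℝ → ℝ} (hf : Continuous f) {B : Set ℝ}
    (hB : ∀ t : ℝ, t ∉ B →
        ∃ ε > (0 : ℝ), ∃ (k : ℤ) (c : ℝ), ∀ s : ℝ, |s - t| < ε → f s = (q : ℝ) ^ k * s + c)
    {a b : ℝ} (hab : a < b) (hn : ∀ t, a < t → t < b → t ∉ B) :
    ∃ (k : ℤ) (c : ℝ), ∀ s, a ≤ s → s ≤ b → f s = (q : ℝ) ^ k * s + c := by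
  have hloc : ∀ t ∈ Set.Ioo a b, ∃ (k : ℤ) (c : ℝ), ∀ᶠ s in nhds t, f s = (q : ℝ) ^ k * s + c := by
    intro t ht
    obtain ⟨ε, hε, k, c, h⟩ := hB t (hn t ht.1 ht.2)
    refine ⟨k, c, ?_⟩
    filter_upwards [Metric.ball_mem_nhds t hε] with s hs
    exact h s (by rwa [Metric.mem_ball, Real.dist_eq] at hs)
  have hder : ∀ t ∈ Set.Ioo a b, ∀ (k : ℤ) (c : ℝ), (∀ᶠ s in nhds t, f s = (q : ℝ) ^ k * s + c) →
      ∀ᶠ s in nhds t, HasDerivAt f ((q : ℝ) ^ k) s := by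
    intro t _ k c h
    filter_upwards [h.eventually_nhds] with s hs
    have h1 : HasDerivAt (fun s : ℝ => (q : ℝ) ^ k * s + c) ((q : ℝ) ^ k) s := by
      simpa using ((hasDerivAt_id s).const_mul ((q : ℝ) ^ k)).add_const c
    exact h1.congr_of_eventuallyEq hs
  have hdd : ∀ t ∈ Set.Ioo a b, HasDerivAt (deriv f) 0 t := by
    intro t ht
    obtain ⟨k, c, h⟩ := hloc t ht
    have h2 : deriv f =ᶠ[nhds t] fun _ => (q : ℝ) ^ k := by
      filter_upwards [hder t ht k c h] with s hs using hs.deriv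
    exact (hasDerivAt_const t _).congr_of_eventuallyEq h2
  set t0 := (a + b) / 2 with ht0
  have ht0m : t0 ∈ Set.Ioo a b := ⟨by rw [ht0]; linarith, by rw [ht0]; linarith⟩
  obtain ⟨k, c, h⟩ := hloc t0 ht0m
  have hd0 : deriv f t0 = (q : ℝ) ^ k := (hder t0 ht0m k c h).self_of_nhds.deriv
  have hconst : ∀ t ∈ Set.Ioo a b, deriv f t = (q : ℝ) ^ k := by
    intro t ht
    rw [← hd0]
    exact isOpen_Ioo.is_const_of_deriv_eq_zero isPreconnected_Ioo
      (fun s hs => (hdd s hs).differentiableAt.differentiableWithinAt)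
      (fun s hs => (hdd s hs).deriv) ht ht0m
  have hg : ∀ t ∈ Set.Ioo a b, HasDerivAt (fun s => f s - (q : ℝ) ^ k * s) 0 t := by
    intro t ht
    obtain ⟨k', c', h'⟩ := hloc t ht
    have h1 := (hder t ht k' c' h').self_of_nhds
    have h2 : HasDerivAt f ((q : ℝ) ^ k) t := by
      have := hconst t ht
      rw [h1.deriv] at this
      rwa [this] at h1
    have h3 := h2.sub ((hasDerivAt_id t).const_mul ((q : ℝ) ^ k))
    rw [mul_one, sub_self] at h3
    exact h3
  have hgc : ∀ t ∈ Set.Ioo a b, f t - (q : ℝ) ^ k * t = f t0 - (q : ℝ) ^ k * t0 := by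
    intro t ht
    exact isOpen_Ioo.is_const_of_deriv_eq_zero isPreconnected_Ioo
      (f := fun s => f s - (q : ℝ) ^ k * s)
      (fun s hs => (hg s hs).differentiableAt.differentiableWithinAt)
      (fun s hs => (hg s hs).deriv) ht ht0m
  refine ⟨k, f t0 - (q : ℝ) ^ k * t0, fun s h1 h2 => ?_⟩
  have hcl : closure (Set.Ioo a b) ⊆ {t | f t = (q : ℝ) ^ k * t + (f t0 - (q : ℝ) ^ k * t0)} := by
    refine closure_minimal (fun t ht => ?_) ?_
    · have := hgc t ht
      simp only [Set.mem_ofPred_eq]; linarith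
    · exact isClosed_eq hf (by fun_prop)
  rw [closure_Ioo hab.ne] at hcl
  exact hcl ⟨h1, h2⟩

/-- An interval inside an affine `q`-adic piece is good when it is deep enough. -/
theorem good_of_affine {q : ℕ} (hq : 2 ≤ q) {f : Equiv.Perm ℝ} (hf : f ∈ PLSet q) {n e : ℕ}
    (hn : n < q ^ e) (k z : ℤ) (r : ℕ) (hr : (r : ℤ) ≤ e - k)
    (h : ∀ y : ℝ, (n : ℝ) / q ^ e ≤ y → y ≤ (n + 1) / q ^ e → f y = (q : ℝ) ^ k * y + z / q ^ r) :
    ∃ J, Aff q f (n, e) J := by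
  have hq0 : (0 : ℝ) < q := by positivity
  have he := pow_pos hq0 e
  obtain ⟨j, hj⟩ : ∃ j : ℕ, (e : ℤ) - k = r + j := ⟨(e - k - r).toNat, by omega⟩
  have hσ : (q : ℝ) ^ k * (q : ℝ) ^ (r + j) = (q : ℝ) ^ e := by
    rw [← zpow_natCast, ← zpow_natCast, ← zpow_add₀ hq0.ne']; congr 1; push_cast; omega
  have hrj := pow_pos hq0 (r + j)
  have key : (q : ℝ) ^ k * (n / (q : ℝ) ^ e) + z / q ^ r = ((n + z * q ^ j : ℤ) : ℝ) / q ^ (r + j) := by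
    rw [← hσ, pow_add]
    have : (q : ℝ) ^ k ≠ 0 := by positivity
    push_cast
    field_simp
  have key' : (q : ℝ) ^ k * ((n + 1) / (q : ℝ) ^ e) + z / q ^ r
      = ((n + z * q ^ j + 1 : ℤ) : ℝ) / q ^ (r + j) := by
    rw [← hσ, pow_add]
    have : (q : ℝ) ^ k ≠ 0 := by positivity
    push_cast
    field_simp
    ring
  have hmono := hf.1
  have hle : (n : ℝ) / q ^ e ≤ (n + 1) / q ^ e := by gcongr; linarith
  have h0 : 0 ≤ f (n / q ^ e) := by
    rw [← PL_zero hf]; exact hmono (by positivity)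
  have h1 : f ((n + 1) / q ^ e) ≤ 1 := by
    conv_rhs => rw [← PL_one hf]
    apply hmono
    rw [div_le_one he]; exact_mod_cast hn
  rw [h _ le_rfl hle, key] at h0
  rw [h _ hle le_rfl, key', div_le_one hrj] at h1
  have h0' : (0 : ℝ) ≤ ((n + z * q ^ j : ℤ) : ℝ) := by
    by_contra hc
    push Not at hc
    exact absurd h0 (not_le.2 (div_neg_of_neg_of_pos hc hrj))
  have h0'' : (0 : ℤ) ≤ n + z * q ^ j := by exact_mod_cast h0'
  obtain ⟨m, hm⟩ := Int.eq_ofNat_of_zero_le h0''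
  rw [hm] at key h1
  have hm1 : m + 1 ≤ q ^ (r + j) := by exact_mod_cast h1
  refine ⟨(m, r + j), Aff.of_affine hq hn (by omega) _ _ hσ ?_ h⟩
  rw [key]; simp

theorem common_den {q : ℕ} (hq : 2 ≤ q) (B : Finset ℝ) (hB : ∀ b ∈ B, IsPAdicRational q b) :
    ∃ N : ℕ, ∀ b ∈ B, ∃ z : ℤ, b = z / (q : ℝ) ^ N := by
  have hq0 : (0 : ℝ) < q := by positivity
  choose! z n h using hB
  refine ⟨B.sup n, fun b hb => ?_⟩
  obtain ⟨j, hj⟩ := Nat.exists_eq_add_of_le (Finset.le_sup (f := n) hb)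
  refine ⟨z b * q ^ j, ?_⟩
  rw [hj, pow_add]
  conv_lhs => rw [h b hb]
  push_cast
  field_simp

theorem PL_finite {q : ℕ} (hq : 2 ≤ q) {f : Equiv.Perm ℝ} (hf : f ∈ PLSet q) :
    (Bad q f).Finite := by
  have hq0 : (0 : ℝ) < q := by positivity
  obtain ⟨B, hBp, hB⟩ := hf.2.2.2
  obtain ⟨N, hN⟩ := common_den hq B hBp
  have hNp := pow_pos hq0 N
  have hpiece : ∀ n : ℕ, ∃ (k : ℤ) (c : ℝ), ∀ s, (n : ℝ) / q ^ N ≤ s → s ≤ (n + 1) / q ^ N →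
      f s = (q : ℝ) ^ k * s + c := by
    intro n
    refine PL_piece (PL_cont hf) hB (by gcongr; linarith) fun t h1 h2 htB => ?_
    obtain ⟨z, rfl⟩ := hN t htB
    rw [div_lt_div_iff_of_pos_right hNp] at h1 h2
    have h1 : (n : ℤ) < z := by exact_mod_cast h1
    have h2 : z < (n : ℤ) + 1 := by exact_mod_cast h2
    omega
  choose k c hkc using hpiece
  have addp : ∀ x y : ℝ, IsPAdicRational q x → IsPAdicRational q y → IsPAdicRational q (x + y) := by
    rintro x y ⟨a, n, rfl⟩ ⟨b, m, rfl⟩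
    refine ⟨a * q ^ m + b * q ^ n, n + m, ?_⟩
    rw [pow_add]; push_cast; field_simp
  have mulp : ∀ (j : ℤ) (x : ℝ), IsPAdicRational q x → IsPAdicRational q ((q : ℝ) ^ j * x) := by
    rintro j x ⟨a, n, rfl⟩
    refine ⟨a * q ^ j.toNat, n + (-j).toNat, ?_⟩
    have : (q : ℝ) ^ j = (q : ℝ) ^ j.toNat / (q : ℝ) ^ (-j).toNat := by
      rw [← zpow_natCast, ← zpow_natCast, ← zpow_sub₀ hq0.ne']; congr 1; omega
    rw [this, pow_add]; push_cast; field_simp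
  have negp : ∀ x : ℝ, IsPAdicRational q x → IsPAdicRational q (-x) := by
    rintro x ⟨a, n, rfl⟩
    exact ⟨-a, n, by push_cast; ring⟩
  have hpt : ∀ n : ℕ, IsPAdicRational q ((n : ℝ) / q ^ N) := fun n => ⟨n, N, by simp⟩
  have hle : ∀ n : ℕ, (n : ℝ) / q ^ N ≤ (n + 1) / q ^ N := fun n => by gcongr; linarith
  have hcp : ∀ n : ℕ, IsPAdicRational q (f (n / q ^ N)) ∧ IsPAdicRational q (c n) := by
    have hc' : ∀ n : ℕ, IsPAdicRational q (f (n / q ^ N)) → IsPAdicRational q (c n) := by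
      intro n h
      have := hkc n _ le_rfl (hle n)
      have e : c n = f (n / q ^ N) + -((q : ℝ) ^ (k n) * (n / q ^ N)) := by linarith
      rw [e]
      exact addp _ _ h (negp _ (mulp _ _ (hpt n)))
    intro n
    induction n with
    | zero =>
      have : IsPAdicRational q (f ((0 : ℕ) / q ^ N)) := by
        simp only [Nat.cast_zero, zero_div, PL_zero hf]
        exact ⟨0, 0, by simp⟩
      exact ⟨this, hc' _ this⟩
    | succ n ih =>
      have h := hkc n _ (hle n) le_rfl
      have : IsPAdicRational q (f ((n + 1 : ℕ) / q ^ N)) := by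
        have hp' := hpt (n + 1)
        push_cast at hp' ⊢
        rw [h]
        exact addp _ _ (mulp _ _ hp') ih.2
      exact ⟨this, hc' _ this⟩
  have hcp' := fun n => (hcp n).2
  choose z r hzr using hcp'
  set D := N + (Finset.range (q ^ N)).sup (fun n => (k n).toNat + r n) with hD
  have hgood : ∀ n e, D ≤ e → (n, e) ∉ Bad q f := by
    rintro n e hDe ⟨hn, hbad⟩
    simp only at hn
    obtain ⟨j, rfl⟩ := Nat.exists_eq_add_of_le ((Nat.le_add_right N _).trans hDe)
    have hn0 : n / q ^ j < q ^ N := Nat.div_lt_of_lt_mul (by rw [mul_comm, ← pow_add]; exact hn)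
    set n0 := n / q ^ j with hn0d
    have hsup := Finset.le_sup (f := fun n => (k n).toNat + r n) (Finset.mem_range.2 hn0)
    refine hbad (good_of_affine hq hf hn (k n0) (z n0) (r n0) (by push_cast; omega) fun y h1 h2 => ?_)
    rw [← hzr n0]
    have hqj := pow_pos hq0 j
    apply hkc
    · refine le_trans ?_ h1
      have : n0 * q ^ j ≤ n := Nat.div_mul_le_self _ _
      have : (n0 : ℝ) * q ^ j ≤ n := by exact_mod_cast this
      rw [pow_add, div_le_div_iff₀ (by positivity) (by positivity)]
      nlinarith
    · refine h2.trans ?_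
      have : n + 1 ≤ (n0 + 1) * q ^ j := Nat.succ_le_of_lt (by
        have := Nat.lt_mul_div_succ n (Nat.pow_pos (n := j) (by omega : 0 < q))
        rw [mul_comm]; exact this)
      have : (n : ℝ) + 1 ≤ (n0 + 1) * q ^ j := by exact_mod_cast this
      rw [pow_add, div_le_div_iff₀ (by positivity) (by positivity)]
      nlinarith
  refine ((Set.finite_Iio (q ^ D)).prod (Set.finite_Iio D)).subset ?_
  rintro ⟨n, e⟩ h
  have he : e < D := by
    by_contra hc
    exact hgood n e (not_lt.1 hc) h
  refine ⟨?_, he⟩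
  exact lt_of_lt_of_le h.1 (Nat.pow_le_pow_right (by omega) he.le)

theorem isP_pow {p k : ℕ} {x : ℝ} (h : IsPAdicRational (p ^ k) x) : IsPAdicRational p x := by
  obtain ⟨a, n, rfl⟩ := h
  exact ⟨a, k * n, by push_cast; rw [pow_mul]⟩

theorem PL_pow_sub (p k : ℕ) : PLSet (p ^ k) ⊆ PLSet p := by
  rintro f ⟨h1, h2, h3, B, hB, h4⟩
  refine ⟨h1, h2, h3, B, fun b hb => isP_pow (hB b hb), fun t ht => ?_⟩
  obtain ⟨ε, hε, j, c, h⟩ := h4 t ht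
  refine ⟨ε, hε, k * j, c, fun s hs => ?_⟩
  rw [h s hs, zpow_mul]; push_cast; norm_cast

/-- bad `p^k`-nodes are bad `p`-nodes -/
theorem bad_pow {p k : ℕ} (hp : 2 ≤ p) (hk : 1 ≤ k) {f : Equiv.Perm ℝ} (hf : f ∈ PLSet (p ^ k))
    {n d : ℕ} (h : (n, d) ∈ Bad (p ^ k) f) : (n, k * d) ∈ Bad p f := by
  have hp0 : (0 : ℝ) < p := by positivity
  refine ⟨by have := h.1; simp only at this ⊢; rwa [pow_mul], ?_⟩
  rintro ⟨⟨m, e⟩, hJ⟩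
  obtain ⟨B, -, hB⟩ := hf.2.2.2
  have hd := pow_pos hp0 (k * d)
  have he := pow_pos hp0 e
  have hlt : (n : ℝ) / p ^ (k * d) < (n + 1) / p ^ (k * d) := by gcongr; linarith
  obtain ⟨t, ht, htB⟩ := ((Set.Ioo_infinite hlt).sdiff B.finite_toSet).nonempty
  obtain ⟨ε, hε, j, c, hs⟩ := hB t htB
  obtain ⟨s, hts, hs2⟩ := exists_between (lt_min ht.2 (show t < t + ε by linarith))
  have hs3 := lt_min_iff.1 hs2
  have a1 := hs t (by simpa using hε)
  have a2 := hs s (by rw [abs_of_pos (by linarith)]; linarith)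
  rw [hJ.slope hp ht.1.le ht.2.le] at a1
  rw [hJ.slope hp (ht.1.trans hts).le hs3.1.le] at a2
  have a3 : ((p : ℝ) ^ (k * d) / p ^ e - ((p ^ k : ℕ) : ℝ) ^ j) * (s - t) = 0 := by linarith
  have a4 : (p : ℝ) ^ (k * d) / p ^ e = ((p ^ k : ℕ) : ℝ) ^ j := by
    rcases mul_eq_zero.1 a3 with h | h <;> linarith
  have a5 : (p : ℝ) ^ ((k * d : ℤ) - e) = (p : ℝ) ^ ((k : ℤ) * j) := by
    rw [zpow_sub₀ hp0.ne', zpow_mul (p : ℝ) k j]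
    have : ((k : ℤ) * (d : ℤ)) = ((k * d : ℕ) : ℤ) := by push_cast; rfl
    rw [this, zpow_natCast, zpow_natCast, a4, zpow_natCast]; push_cast; rfl
  have a6 := zpow_right_injective₀ hp0 (by have : (2 : ℝ) ≤ p := by exact_mod_cast hp
                                           linarith) a5
  have hdvd : (k : ℤ) ∣ e := ⟨d - j, by rw [mul_sub]; omega⟩
  have hdvd : k ∣ e := by exact_mod_cast hdvd
  obtain ⟨e', rfl⟩ := hdvd
  refine h.2 ⟨(m, e'), h.1, ?_, fun t h0 h1 => ?_⟩
  · have := hJ.2.1; simp only at this ⊢; rwa [← pow_mul]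
  · have := hJ.2.2 t h0 h1
    simp only at this ⊢
    push_cast
    rwa [← pow_mul, ← pow_mul]

theorem card_pow {p k : ℕ} (hp : 2 ≤ p) (hk : 1 ≤ k) {f : Equiv.Perm ℝ} (hf : f ∈ PLSet (p ^ k)) :
    (Bf (p ^ k) f).card ≤ (Bf p f).card := by
  have hq : 2 ≤ p ^ k := hp.trans (Nat.le_self_pow (by omega) p)
  refine Finset.card_le_card_of_injOn (fun I => (I.1, k * I.2)) ?_ ?_
  · rintro ⟨n, d⟩ hI
    have hI := (mem_Bf (PL_finite hq hf)).1 hI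
    exact (mem_Bf (PL_finite hp (PL_pow_sub p k hf))).2 (bad_pow hp hk hf hI)
  · rintro ⟨n, d⟩ - ⟨n', d'⟩ - h
    simp only [Prod.mk.injEq] at h
    have := Nat.eq_of_mul_eq_mul_left (by omega) h.2
    rw [h.1, this]


/-- The homeomorphism which is the identity up to `b` and has slope `s` afterwards. -/
noncomputable def bump (b s : ℝ) (hs : 0 < s) : Equiv.Perm ℝ where
  toFun t := if t ≤ b then t else b + s * (t - b)
  invFun t := if t ≤ b then t else b + (t - b) / s
  left_inv t := by
    by_cases h : t ≤ b
    · simp [h]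
    · have : ¬ (b + s * (t - b) ≤ b) := by
        have : 0 < s * (t - b) := mul_pos hs (by linarith)
        linarith
      simp only [h, this, if_false]
      field_simp; ring
  right_inv t := by
    by_cases h : t ≤ b
    · simp [h]
    · have : ¬ (b + (t - b) / s ≤ b) := by
        have : 0 < (t - b) / s := div_pos (by linarith) hs
        linarith
      simp only [h, this, if_false]
      field_simp; ring

theorem bump_le {b s t : ℝ} (hs : 0 < s) (h : t ≤ b) : bump b s hs t = t := by
  simp [bump, h]

theorem bump_ge {b s t : ℝ} (hs : 0 < s) (h : b ≤ t) : bump b s hs t = b + s * (t - b) := by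
  rcases h.eq_or_lt with rfl | h
  · simp [bump]
  · simp [bump, not_le.2 h]

theorem bump_mono {b s : ℝ} (hs : 0 < s) : Monotone (bump b s hs) := by
  intro x y hxy
  rcases le_total x b with hx | hx <;> rcases le_total y b with hy | hy
  · rw [bump_le hs hx, bump_le hs hy]; exact hxy
  · rw [bump_le hs hx, bump_ge hs hy]
    nlinarith [mul_nonneg hs.le (sub_nonneg.2 hy)]
  · have : x = y := by linarith
    rw [this]
  · rw [bump_ge hs hx, bump_ge hs hy]; gcongr

theorem exists_pl (q a u v : ℝ) (hq : 0 < q) (hu : 0 ≤ u) (hv : 0 ≤ v) :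
    ∃ x : Equiv.Perm ℝ, Monotone x ∧ (∀ t ≤ a, x t = t) ∧
      (∀ t, a ≤ t → t ≤ a + u → x t = a + q * (t - a)) ∧
      (∀ t, a + u ≤ t → t ≤ a + u + v → x t = t + (q - 1) * u) ∧
      (∀ t, a + u + v ≤ t → t ≤ a + u + v + q * u → x t = a + q * u + v + (t - (a + u + v)) / q) ∧
      (∀ t, a + u + v + q * u ≤ t → x t = t) := by
  have hq' : 0 < 1 / q := by positivity
  have hqu : 0 ≤ q * u := by positivity
  refine ⟨bump a q hq * bump (a + u) (1 / q) hq' * bump (a + u + v) (1 / q) hq' *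
    bump (a + u + v + q * u) q hq, ?_, ?_, ?_, ?_, ?_, ?_⟩
  · exact (((bump_mono hq).comp (bump_mono hq')).comp (bump_mono hq')).comp (bump_mono hq)
  · intro t h
    simp only [Equiv.Perm.mul_apply]
    rw [bump_le _ (by linarith : t ≤ a + u + v + q * u), bump_le _ (by linarith : t ≤ a + u + v),
      bump_le _ (by linarith : t ≤ a + u), bump_le _ h]
  · intro t h1 h2
    simp only [Equiv.Perm.mul_apply]
    rw [bump_le _ (by linarith : t ≤ a + u + v + q * u), bump_le _ (by linarith : t ≤ a + u + v),
      bump_le _ (by linarith : t ≤ a + u), bump_ge _ h1]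
  · intro t h1 h2
    simp only [Equiv.Perm.mul_apply]
    rw [bump_le _ (by linarith : t ≤ a + u + v + q * u), bump_le _ (by linarith : t ≤ a + u + v),
      bump_ge _ h1, bump_ge]
    · field_simp; ring
    · have := mul_nonneg hq'.le (sub_nonneg.2 h1)
      linarith
  · intro t h1 h2
    simp only [Equiv.Perm.mul_apply]
    have a1 := mul_nonneg hq'.le (sub_nonneg.2 h1)
    rw [bump_le _ (by linarith : t ≤ a + u + v + q * u), bump_ge _ h1, bump_ge (b := a + u) _ (by linarith), bump_ge]
    · field_simp; ring
    · have := mul_nonneg hq'.le (show 0 ≤ a + u + v + 1 / q * (t - (a + u + v)) - (a + u) by linarith)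
      linarith
  · intro t h1
    simp only [Equiv.Perm.mul_apply]
    have a0 := mul_nonneg hq.le (sub_nonneg.2 h1)
    have a1 := mul_nonneg hq'.le (show 0 ≤ a + u + v + q * u + q * (t - (a + u + v + q * u)) - (a + u + v) by linarith)
    rw [bump_ge _ h1, bump_ge (b := a + u + v) _ (by linarith), bump_ge (b := a + u) _ (by linarith), bump_ge]
    · field_simp; ring
    · have := mul_nonneg hq'.le (show 0 ≤ a + u + v + 1 / q * (a + u + v + q * u + q * (t - (a + u + v + q * u)) - (a + u + v)) - (a + u) by linarith)
      linarith

/-- The generator moving the caret at the node `(q^d - 1 - g, d)` to the node `(q^d - 1, d)`. -/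
structure Gen (q d g : ℕ) (x : Equiv.Perm ℝ) : Prop where
  hq : 2 ≤ q
  hd : 1 ≤ d
  hg : 1 ≤ g
  hgq : g < q
  mem : x ∈ PLSet q
  r1 : ∀ t : ℝ, t ≤ 1 - (g + 1) / (q : ℝ) ^ d → x t = t
  r2 : ∀ t : ℝ, 1 - (g + 1) / (q : ℝ) ^ d ≤ t →
    t ≤ 1 - (q * (g + 1) - g) / (q : ℝ) ^ (d + 1) →
    x t = q * t - (q - 1) * (1 - (g + 1) / (q : ℝ) ^ d)
  r3 : ∀ t : ℝ, 1 - (q * (g + 1) - g) / (q : ℝ) ^ (d + 1) ≤ t → t ≤ 1 - g / (q : ℝ) ^ d →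
    x t = t + (q - 1) * g / (q : ℝ) ^ (d + 1)
  r4 : ∀ t : ℝ, 1 - g / (q : ℝ) ^ d ≤ t → t ≤ 1 → x t = t / q + (q - 1) / q

theorem exists_gen {q d g : ℕ} (hq : 2 ≤ q) (hd : 1 ≤ d) (hg : 1 ≤ g) (hgq : g < q) :
    ∃ x, Gen q d g x := by
  have hq2 : (2 : ℝ) ≤ q := by exact_mod_cast hq
  have hq0 : (0 : ℝ) < q := by linarith
  have hd0 := pow_pos hq0 d
  have hg1 : (1 : ℝ) ≤ g := by exact_mod_cast hg
  have hgq' : (g : ℝ) + 1 ≤ q := by exact_mod_cast hgq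
  obtain ⟨x, hm, h1, h2, h3, h4, h5⟩ := exists_pl q (1 - (g + 1) / (q : ℝ) ^ d) (g / (q : ℝ) ^ (d + 1))
    ((q - g) / (q : ℝ) ^ (d + 1)) hq0 (by positivity) (div_nonneg (by linarith) (by positivity))
  have e1 : 1 - ((g : ℝ) + 1) / (q : ℝ) ^ d + g / (q : ℝ) ^ (d + 1)
      = 1 - (q * (g + 1) - g) / (q : ℝ) ^ (d + 1) := by rw [pow_succ]; field_simp; ring
  have e2 : 1 - (q * ((g : ℝ) + 1) - g) / (q : ℝ) ^ (d + 1) + (q - g) / (q : ℝ) ^ (d + 1)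
      = 1 - g / (q : ℝ) ^ d := by rw [pow_succ]; field_simp; ring
  have e3 : 1 - (g : ℝ) / (q : ℝ) ^ d + q * (g / (q : ℝ) ^ (d + 1)) = 1 := by
    rw [pow_succ]; field_simp; ring
  rw [e1] at h2 h3 h4 h5
  rw [e2] at h3 h4 h5
  rw [e3] at h4 h5
  have r2 : ∀ t : ℝ, 1 - (g + 1) / (q : ℝ) ^ d ≤ t →
      t ≤ 1 - (q * (g + 1) - g) / (q : ℝ) ^ (d + 1) →
      x t = q * t - (q - 1) * (1 - (g + 1) / (q : ℝ) ^ d) := by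
    intro t a b; rw [h2 t a b]; ring
  have r3 : ∀ t : ℝ, 1 - (q * (g + 1) - g) / (q : ℝ) ^ (d + 1) ≤ t → t ≤ 1 - g / (q : ℝ) ^ d →
      x t = t + (q - 1) * g / (q : ℝ) ^ (d + 1) := by
    intro t a b; rw [h3 t a b]; ring
  have r4 : ∀ t : ℝ, 1 - g / (q : ℝ) ^ d ≤ t → t ≤ 1 → x t = t / q + (q - 1) / q := by
    intro t a b; rw [h4 t a b, pow_succ]; field_simp; ring
  have ha : 0 ≤ 1 - ((g : ℝ) + 1) / (q : ℝ) ^ d := by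
    rw [sub_nonneg, div_le_one hd0]
    calc (g : ℝ) + 1 ≤ q ^ 1 := by simpa using hgq'
      _ ≤ _ := pow_le_pow_right₀ (by linarith) hd
  have open_case : ∀ (U : Set ℝ), IsOpen U → ∀ t ∈ U, ∀ (k : ℤ) (c : ℝ),
      (∀ s ∈ U, x s = (q : ℝ) ^ k * s + c) →
      ∃ ε > (0 : ℝ), ∃ (k : ℤ) (c : ℝ), ∀ s : ℝ, |s - t| < ε → x s = (q : ℝ) ^ k * s + c := by
    intro U hU t ht k c h
    obtain ⟨ε, hε, hs⟩ := Metric.isOpen_iff.1 hU t ht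
    exact ⟨ε, hε, k, c, fun s h' => h s (hs (by rwa [Metric.mem_ball, Real.dist_eq]))⟩
  refine ⟨x, hq, hd, hg, hgq, ⟨hm, fun t ht => h1 t (ht.trans ha), fun t ht => h5 t ht, ?_⟩, h1, r2, r3, r4⟩
  classical
  refine ⟨{1 - (g + 1) / (q : ℝ) ^ d, 1 - (q * (g + 1) - g) / (q : ℝ) ^ (d + 1), 1 - g / (q : ℝ) ^ d, 1},
    ?_, ?_⟩
  · intro b hb
    simp only [Finset.mem_insert, Finset.mem_singleton] at hb
    rcases hb with rfl | rfl | rfl | rfl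
    · exact ⟨q ^ d - (g + 1), d, by push_cast; field_simp⟩
    · exact ⟨q ^ (d + 1) - (q * (g + 1) - g), d + 1, by push_cast; field_simp⟩
    · exact ⟨q ^ d - g, d, by push_cast; field_simp⟩
    · exact ⟨1, 0, by simp⟩
  · intro t ht
    simp only [Finset.coe_insert, Finset.coe_singleton, Set.mem_insert_iff, Set.mem_singleton_iff,
      not_or] at ht
    obtain ⟨n1, n2, n3, n4⟩ := ht
    rcases lt_or_gt_of_ne n1 with h | h'
    · exact open_case _ isOpen_Iio t h 0 0 fun s hs => by rw [h1 s (le_of_lt hs)]; simp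
    rcases lt_or_gt_of_ne n2 with h | h''
    · exact open_case _ isOpen_Ioo t ⟨h', h⟩ 1 (-((q - 1) * (1 - (g + 1) / (q : ℝ) ^ d)))
        fun s hs => by rw [r2 s hs.1.le hs.2.le]; simp; ring
    rcases lt_or_gt_of_ne n3 with h | hD
    · exact open_case _ isOpen_Ioo t ⟨h'', h⟩ 0 _ fun s hs => by
        rw [r3 s hs.1.le hs.2.le, zpow_zero, one_mul]
    rcases lt_or_gt_of_ne n4 with h | hE
    · exact open_case _ isOpen_Ioo t ⟨hD, h⟩ (-1) ((q - 1) / q) fun s hs => by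
        rw [r4 s hs.1.le hs.2.le, zpow_neg_one]; ring
    · exact open_case _ isOpen_Ioi t hE 0 0 fun s hs => by rw [h5 s (le_of_lt hs)]; simp

theorem bd {q : ℕ} (hq : 2 ≤ q) (n z : ℕ) {r e : ℕ} (h : r ≤ e) :
    ((n : ℝ) + 1) / q ^ e ≤ 1 - z / (q : ℝ) ^ r ∨ 1 - z / (q : ℝ) ^ r ≤ n / (q : ℝ) ^ e := by
  have hq0 : (0 : ℝ) < q := by positivity
  obtain ⟨j, rfl⟩ := Nat.exists_eq_add_of_le h
  have e1 : 1 - z / (q : ℝ) ^ r = ((q : ℝ) ^ (r + j) - z * q ^ j) / q ^ (r + j) := by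
    rw [pow_add]; field_simp
  have hp := pow_pos hq0 (r + j)
  rw [e1, div_le_div_iff_of_pos_right hp, div_le_div_iff_of_pos_right hp]
  by_cases hc : n + 1 + z * q ^ j ≤ q ^ (r + j)
  · left
    have : (n : ℝ) + 1 + z * q ^ j ≤ q ^ (r + j) := by exact_mod_cast hc
    linarith
  · right
    have : q ^ (r + j) ≤ n + z * q ^ j := by omega
    have : (q : ℝ) ^ (r + j) ≤ n + z * q ^ j := by exact_mod_cast this
    linarith

theorem Gen.inv1 {q d g : ℕ} {x : Equiv.Perm ℝ} (h : Gen q d g x) (t : ℝ)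
    (ht : t ≤ 1 - (g + 1) / (q : ℝ) ^ d) : x⁻¹ t = t := by
  rw [Equiv.Perm.inv_eq_iff_eq, h.r1 t ht]

theorem Gen.inv2 {q d g : ℕ} {x : Equiv.Perm ℝ} (h : Gen q d g x) (t : ℝ)
    (h1 : 1 - (g + 1) / (q : ℝ) ^ d ≤ t) (h2 : t ≤ 1 - 1 / (q : ℝ) ^ d) :
    x⁻¹ t = t / q + (q - 1) / q * (1 - (g + 1) / (q : ℝ) ^ d) := by
  have hq0 : (0 : ℝ) < q := by have := h.hq; positivity
  rw [Equiv.Perm.inv_eq_iff_eq, h.r2]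
  · field_simp; ring
  · have : (1 - (g + 1) / (q : ℝ) ^ d) / q ≤ t / q := by gcongr
    have e : (1 - (g + 1) / (q : ℝ) ^ d) = (1 - (g + 1) / (q : ℝ) ^ d) / q + (q - 1) / q * (1 - (g + 1) / (q : ℝ) ^ d) := by
      field_simp; ring
    linarith
  · have : t / q ≤ (1 - 1 / (q : ℝ) ^ d) / q := by gcongr
    have e : 1 - (q * (g + 1) - g) / (q : ℝ) ^ (d + 1) = (1 - 1 / (q : ℝ) ^ d) / q + (q - 1) / q * (1 - (g + 1) / (q : ℝ) ^ d) := by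
      rw [pow_succ]; field_simp; ring
    linarith

theorem Gen.inv3 {q d g : ℕ} {x : Equiv.Perm ℝ} (h : Gen q d g x) (t : ℝ)
    (h1 : 1 - 1 / (q : ℝ) ^ d ≤ t) (h2 : t ≤ 1 - g / (q : ℝ) ^ (d + 1)) :
    x⁻¹ t = t - (q - 1) * g / (q : ℝ) ^ (d + 1) := by
  have hq0 : (0 : ℝ) < q := by have := h.hq; positivity
  rw [Equiv.Perm.inv_eq_iff_eq, h.r3]
  · ring
  · have e : 1 - (q * (g + 1) - g) / (q : ℝ) ^ (d + 1) = 1 - 1 / (q : ℝ) ^ d - (q - 1) * g / (q : ℝ) ^ (d + 1) := by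
      rw [pow_succ]; field_simp; ring
    linarith
  · have e : 1 - g / (q : ℝ) ^ d = 1 - g / (q : ℝ) ^ (d + 1) - (q - 1) * g / (q : ℝ) ^ (d + 1) := by
      rw [pow_succ]; field_simp; ring
    linarith

theorem Gen.inv4 {q d g : ℕ} {x : Equiv.Perm ℝ} (h : Gen q d g x) (t : ℝ)
    (h1 : 1 - g / (q : ℝ) ^ (d + 1) ≤ t) (h2 : t ≤ 1) :
    x⁻¹ t = q * t - (q - 1) := by
  have hq0 : (0 : ℝ) < q := by have := h.hq; positivity
  rw [Equiv.Perm.inv_eq_iff_eq, h.r4]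
  · field_simp; ring
  · have : q * (1 - g / (q : ℝ) ^ (d + 1)) ≤ q * t := by gcongr
    have e : 1 - g / (q : ℝ) ^ d = q * (1 - g / (q : ℝ) ^ (d + 1)) - (q - 1) := by
      rw [pow_succ]; field_simp; ring
    linarith
  · nlinarith

theorem Gen.low {q d g : ℕ} {x : Equiv.Perm ℝ} (h : Gen q d g x) {n e : ℕ} (he : e < d)
    (hn : n + 1 < q ^ e) : ((n : ℝ) + 1) / q ^ e ≤ 1 - (g + 1) / (q : ℝ) ^ d := by
  have hq0 : (0 : ℝ) < q := by have := h.hq; positivity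
  have hgq : (g : ℝ) + 1 ≤ q := by exact_mod_cast h.hgq
  have hq1 : (1 : ℝ) ≤ q := by have : 1 ≤ q := by have := h.hq; omega
                               exact_mod_cast this
  have hn' : (n : ℝ) + 1 + 1 ≤ q ^ e := by exact_mod_cast hn
  have a1 : ((n : ℝ) + 1) / q ^ e + 1 / q ^ e ≤ 1 := by
    rw [← add_div, div_le_one (by positivity)]; exact hn'
  have a2 : ((g : ℝ) + 1) / (q : ℝ) ^ d ≤ 1 / q ^ e := by
    rw [div_le_div_iff₀ (by positivity) (by positivity), one_mul]
    calc ((g : ℝ) + 1) * q ^ e ≤ q * q ^ e := by gcongr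
      _ = q ^ (e + 1) := by ring
      _ ≤ _ := pow_le_pow_right₀ hq1 he
  linarith

theorem node_le_one {q n e : ℕ} (hq : 2 ≤ q) (hn : n < q ^ e) : ((n : ℝ) + 1) / q ^ e ≤ 1 := by
  have hq0 : (0 : ℝ) < q := by positivity
  rw [div_le_one (by positivity)]; exact_mod_cast hn

theorem Gen.good {q d g : ℕ} {x : Equiv.Perm ℝ} (h : Gen q d g x) {n e : ℕ} (hn : n < q ^ e)
    (h1 : ¬ (n + 1 = q ^ e ∧ e < d)) (h2 : ¬ (e = d ∧ n + 1 + g = q ^ d)) :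
    (n, e) ∉ Bad q x := by
  rw [not_bad hn]
  have hq := h.hq
  have hd := h.hd
  have hq0 : (0 : ℝ) < q := by positivity
  have hle1 := node_le_one hq hn
  have P1 : ((n : ℝ) + 1) / q ^ e ≤ 1 - (g + 1) / (q : ℝ) ^ d → ∃ J, Aff q x (n, e) J := by
    intro hh
    refine good_of_affine hq h.mem hn 0 0 0 (by simp) fun y _ hy => ?_
    rw [h.r1 y (hy.trans hh)]; simp
  have P4 : 1 - g / (q : ℝ) ^ d ≤ (n : ℝ) / q ^ e → ∃ J, Aff q x (n, e) J := by
    intro hh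
    refine good_of_affine hq h.mem hn (-1) (q - 1) 1 (by omega) fun y hy hy' => ?_
    rw [h.r4 y (hh.trans hy) (hy'.trans hle1), zpow_neg_one]; push_cast; field_simp
  rcases lt_trichotomy e d with he | he | he
  · exact P1 (h.low he (by omega))
  · subst he
    have := bd hq n (g + 1) (le_refl e)
    push_cast at this
    rcases this with hh | hh
    · exact P1 hh
    · have hh' := hh
      apply P4
      have hp := pow_pos hq0 e
      have e1 : ∀ z : ℝ, 1 - z / (q : ℝ) ^ e = ((q : ℝ) ^ e - z) / q ^ e := fun z => by field_simp
      rw [e1, div_le_div_iff_of_pos_right hp] at hh' ⊢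
      have : q ^ e ≤ n + (g + 1) := by
        have : (q : ℝ) ^ e ≤ n + (g + 1) := by linarith
        exact_mod_cast this
      have : q ^ e ≤ n + g := by omega
      have : (q : ℝ) ^ e ≤ n + g := by exact_mod_cast this
      linarith
  · have b1 := bd hq n (g + 1) he.le
    push_cast at b1
    rcases b1 with hh | hh1
    · exact P1 hh
    have b2 := bd hq n (q * (g + 1) - g) (Nat.succ_le_of_lt he)
    have : g ≤ q * (g + 1) := by nlinarith
    push_cast [this] at b2
    rcases b2 with hh | hh2
    · refine good_of_affine hq h.mem hn 1 (-((q - 1) * (q ^ d - (g + 1)))) d (by omega) fun y hy hy' => ?_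
      rw [h.r2 y (hh1.trans hy) (hy'.trans hh)]; push_cast; field_simp; ring
    rcases bd hq n g he.le with hh | hh3
    · refine good_of_affine hq h.mem hn 0 ((q - 1) * g) (d + 1) (by omega) fun y hy hy' => ?_
      rw [h.r3 y (hh2.trans hy) (hy'.trans hh)]; push_cast; simp
    · exact P4 hh3

theorem Gen.good_inv {q d g : ℕ} {x : Equiv.Perm ℝ} (h : Gen q d g x) (hx : x⁻¹ ∈ PLSet q) {n e : ℕ}
    (hn : n < q ^ e) (h1 : ¬ (n + 1 = q ^ e ∧ e ≤ d)) : (n, e) ∉ Bad q x⁻¹ := by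
  rw [not_bad hn]
  have hq := h.hq
  have hd := h.hd
  have hq0 : (0 : ℝ) < q := by positivity
  have hle1 := node_le_one hq hn
  have P1 : ((n : ℝ) + 1) / q ^ e ≤ 1 - (g + 1) / (q : ℝ) ^ d → ∃ J, Aff q x⁻¹ (n, e) J := by
    intro hh
    refine good_of_affine hq hx hn 0 0 0 (by simp) fun y _ hy => ?_
    rw [h.inv1 y (hy.trans hh)]; simp
  have P2 : d ≤ e → 1 - (g + 1) / (q : ℝ) ^ d ≤ n / (q : ℝ) ^ e →
      ((n : ℝ) + 1) / q ^ e ≤ 1 - 1 / (q : ℝ) ^ d → ∃ J, Aff q x⁻¹ (n, e) J := by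
    intro he hh hh'
    refine good_of_affine hq hx hn (-1) ((q - 1) * (q ^ d - (g + 1))) (d + 1) (by push_cast; omega) fun y hy hy' => ?_
    rw [h.inv2 y (hh.trans hy) (hy'.trans hh'), pow_succ, zpow_neg_one]; push_cast; field_simp
  rcases lt_or_ge e d with he | he
  · exact P1 (h.low he (by omega))
  have b1 := bd hq n (g + 1) he
  push_cast at b1
  rcases b1 with hh | hh1
  · exact P1 hh
  have b2 := bd hq n 1 he
  push_cast at b2
  rcases b2 with hh | hh2
  · exact P2 he hh1 hh
  have he' : d + 1 ≤ e := by
    rcases he.eq_or_lt with rfl | he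
    · exfalso
      have hp := pow_pos hq0 d
      have e1 : ∀ z : ℝ, 1 - z / (q : ℝ) ^ d = ((q : ℝ) ^ d - z) / q ^ d := fun z => by field_simp
      rw [e1, div_le_div_iff_of_pos_right hp] at hh2
      have : q ^ d ≤ n + 1 := by
        have : (q : ℝ) ^ d ≤ n + 1 := by linarith
        exact_mod_cast this
      omega
    · exact he
  rcases bd hq n g he' with hh | hh3
  · refine good_of_affine hq hx hn 0 (-((q - 1) * g)) (d + 1) (by push_cast; omega) fun y hy hy' => ?_
    rw [h.inv3 y (hh2.trans hy) (hy'.trans hh)]; push_cast; simp; ring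
  · refine good_of_affine hq hx hn 1 (-(q - 1)) 0 (by push_cast; omega) fun y hy hy' => ?_
    rw [h.inv4 y (hh3.trans hy) (hy'.trans hle1)]; push_cast; simp; ring

theorem Aff.slope_eq {q : ℕ} (hq : 2 ≤ q) {f : Equiv.Perm ℝ} {n d m e : ℕ} (h : Aff q f (n, d) (m, e))
    {y z s : ℝ} (h1 : (n : ℝ) / q ^ d ≤ y) (hyz : y < z) (h2 : z ≤ (n + 1) / q ^ d)
    (hs : f z - f y = s * (z - y)) : s = (q : ℝ) ^ d / q ^ e := by
  rw [h.slope hq h1 (hyz.le.trans h2), h.slope hq (h1.trans hyz.le) h2] at hs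
  have : (s - (q : ℝ) ^ d / q ^ e) * (z - y) = 0 := by linarith
  rcases mul_eq_zero.1 this with h | h <;> linarith

theorem Gen.is_bad {q d g : ℕ} {x : Equiv.Perm ℝ} (h : Gen q d g x) {n : ℕ} (hn : n + 1 + g = q ^ d) :
    (n, d) ∈ Bad q x := by
  refine ⟨by simp only; omega, ?_⟩
  rintro ⟨⟨m, e⟩, hJ⟩
  have hq := h.hq
  have hq2 : (2 : ℝ) ≤ q := by exact_mod_cast hq
  have hq0 : (0 : ℝ) < q := by positivity
  have hp := pow_pos hq0 d
  have hn' : (n : ℝ) = q ^ d - (g + 1) := by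
    have : (n : ℝ) + 1 + g = q ^ d := by exact_mod_cast hn
    linarith
  have hg1 : (1 : ℝ) ≤ g := by exact_mod_cast h.hg
  have hgq : (g : ℝ) + 1 ≤ q := by exact_mod_cast h.hgq
  have e1 : (n : ℝ) / q ^ d = 1 - (g + 1) / (q : ℝ) ^ d := by rw [hn']; field_simp
  have e2 : ((n : ℝ) + 1) / q ^ d = 1 - g / (q : ℝ) ^ d := by rw [hn']; field_simp; ring
  have l1 : 1 - (g + 1) / (q : ℝ) ^ d < 1 - (q * (g + 1) - g) / (q : ℝ) ^ (d + 1) := by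
    have : 1 - (q * (g + 1) - g) / (q : ℝ) ^ (d + 1) = 1 - (g + 1) / (q : ℝ) ^ d + g / (q : ℝ) ^ (d + 1) := by
      rw [pow_succ]; field_simp; ring
    have : 0 < g / (q : ℝ) ^ (d + 1) := by positivity
    linarith
  have l2 : 1 - (q * (g + 1) - g) / (q : ℝ) ^ (d + 1) < 1 - g / (q : ℝ) ^ d := by
    have : 1 - g / (q : ℝ) ^ d = 1 - (q * (g + 1) - g) / (q : ℝ) ^ (d + 1) + (q - g) / (q : ℝ) ^ (d + 1) := by
      rw [pow_succ]; field_simp; ring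
    have : 0 < (q - g) / (q : ℝ) ^ (d + 1) := div_pos (by linarith) (by positivity)
    linarith
  have s1 := hJ.slope_eq hq (s := q) e1.le l1 (by rw [e2]; exact l2.le)
    (by rw [h.r2 _ le_rfl l1.le, h.r2 _ l1.le le_rfl]; ring)
  have s2 := hJ.slope_eq hq (s := 1) (e1.le.trans l1.le) l2 e2.ge
    (by rw [h.r3 _ le_rfl l2.le, h.r3 _ l2.le le_rfl]; ring)
  linarith

theorem Gen.is_bad_inv {q d g : ℕ} {x : Equiv.Perm ℝ} (h : Gen q d g x) {n : ℕ} (hn : n + 1 = q ^ d) :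
    (n, d) ∈ Bad q x⁻¹ := by
  refine ⟨by simp only; omega, ?_⟩
  rintro ⟨⟨m, e⟩, hJ⟩
  have hq := h.hq
  have hq2 : (2 : ℝ) ≤ q := by exact_mod_cast hq
  have hq0 : (0 : ℝ) < q := by positivity
  have hp := pow_pos hq0 d
  have hn' : (n : ℝ) = q ^ d - 1 := by
    have : (n : ℝ) + 1 = q ^ d := by exact_mod_cast hn
    linarith
  have hg1 : (1 : ℝ) ≤ g := by exact_mod_cast h.hg
  have hgq : (g : ℝ) + 1 ≤ q := by exact_mod_cast h.hgq
  have e1 : (n : ℝ) / q ^ d = 1 - 1 / (q : ℝ) ^ d := by rw [hn']; field_simp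
  have e2 : ((n : ℝ) + 1) / q ^ d = 1 := by rw [hn']; field_simp; ring
  have l1 : 1 - 1 / (q : ℝ) ^ d < 1 - g / (q : ℝ) ^ (d + 1) := by
    have : 1 - g / (q : ℝ) ^ (d + 1) = 1 - 1 / (q : ℝ) ^ d + (q - g) / (q : ℝ) ^ (d + 1) := by
      rw [pow_succ]; field_simp; ring
    have : 0 < (q - g) / (q : ℝ) ^ (d + 1) := div_pos (by linarith) (by positivity)
    linarith
  have l2 : 1 - g / (q : ℝ) ^ (d + 1) < 1 := by
    have : 0 < g / (q : ℝ) ^ (d + 1) := by positivity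
    linarith
  have s1 := hJ.slope_eq hq (s := 1) e1.le l1 (by rw [e2]; exact l2.le)
    (by rw [h.inv3 _ le_rfl l1.le, h.inv3 _ l1.le le_rfl]; ring)
  have s2 := hJ.slope_eq hq (s := q) (e1.le.trans l1.le) l2 e2.ge
    (by rw [h.inv4 _ le_rfl l2.le, h.inv4 _ l2.le le_rfl]; ring)
  linarith


theorem Aff.left {q : ℕ} (hq : 2 ≤ q) {f : Equiv.Perm ℝ} (hf : f ∈ PLSet q) {I J : ℕ × ℕ}
    (h : Aff q f I J) : J.1 = 0 ↔ I.1 = 0 := by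
  have hq0 : (0 : ℝ) < q := by positivity
  have h0 := h.2.2 0 le_rfl zero_le_one
  simp only [add_zero] at h0
  have hI := (pow_pos hq0 I.2).ne'
  have hJ := (pow_pos hq0 J.2).ne'
  constructor
  · intro h'
    rw [h', Nat.cast_zero, zero_div, ← PL_zero hf] at h0
    have := f.injective h0
    rw [div_eq_zero_iff] at this
    rcases this with h | h
    · exact_mod_cast h
    · exact absurd h hI
  · intro h'
    rw [h', Nat.cast_zero, zero_div, PL_zero hf] at h0
    have := h0.symm
    rw [div_eq_zero_iff] at this
    rcases this with h | h
    · exact_mod_cast h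
    · exact absurd h hJ

theorem Aff.right {q : ℕ} (hq : 2 ≤ q) {f : Equiv.Perm ℝ} (hf : f ∈ PLSet q) {I J : ℕ × ℕ}
    (h : Aff q f I J) : J.1 + 1 = q ^ J.2 ↔ I.1 + 1 = q ^ I.2 := by
  have hq0 : (0 : ℝ) < q := by positivity
  have h0 := h.2.2 1 zero_le_one le_rfl
  have hI := (pow_pos hq0 I.2).ne'
  have hJ := (pow_pos hq0 J.2).ne'
  have key : ∀ K : ℕ × ℕ, ((K.1 : ℝ) + 1) / (q : ℝ) ^ K.2 = 1 ↔ K.1 + 1 = q ^ K.2 := by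
    intro K
    rw [div_eq_one_iff_eq (pow_pos hq0 K.2).ne']
    exact_mod_cast Iff.rfl
  rw [← key, ← key, ← h0]
  constructor
  · intro h'
    exact f.injective (h'.trans (PL_one hf).symm)
  · intro h'
    rw [h', PL_one hf]

/-- weight counting nodes on the left spine -/
def wl (I : ℕ × ℕ) : ℕ := if I.1 = 0 then 1 else 0

/-- weight: `0` on the left spine, `1` on the right spine, `2` elsewhere -/
def w2 (q : ℕ) (I : ℕ × ℕ) : ℕ := if I.1 = 0 then 0 else if I.1 + 1 = q ^ I.2 then 1 else 2

theorem wl_aff {q : ℕ} (hq : 2 ≤ q) {f : Equiv.Perm ℝ} (hf : f ∈ PLSet q) (I J : ℕ × ℕ)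
    (h : Aff q f I J) : wl J = wl I := by
  simp only [wl, h.left hq hf]

theorem w2_aff {q : ℕ} (hq : 2 ≤ q) {f : Equiv.Perm ℝ} (hf : f ∈ PLSet q) (I J : ℕ × ℕ)
    (h : Aff q f I J) : w2 q J = w2 q I := by
  simp only [w2, h.left hq hf, h.right hq hf]

theorem Gen.bf1 {q g : ℕ} {x : Equiv.Perm ℝ} (h : Gen q 1 g x) {n : ℕ} (hn : n + 1 + g = q) :
    Bf q x = {(0, 0), (n, 1)} := by
  have hq := h.hq
  have hb : (n, 1) ∈ Bad q x := h.is_bad (by simpa using hn)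
  ext ⟨m, e⟩
  rw [mem_Bf (PL_finite hq h.mem)]
  simp only [Finset.mem_insert, Finset.mem_singleton, Prod.mk.injEq]
  constructor
  · intro hm
    by_contra hc
    refine h.good hm.1 ?_ ?_ hm
    · rintro ⟨h1, h2⟩
      have : e = 0 := by omega
      subst this
      simp at h1
      omega
    · rintro ⟨rfl, h2⟩
      rw [pow_one] at h2
      omega
  · rintro (⟨rfl, rfl⟩ | ⟨rfl, rfl⟩)
    · exact bad_root hq hb
    · exact hb

theorem Gen.bf1_inv {q g : ℕ} {x : Equiv.Perm ℝ} (h : Gen q 1 g x) (hx : x⁻¹ ∈ PLSet q) :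
    Bf q x⁻¹ = {(0, 0), (q - 1, 1)} := by
  have hq := h.hq
  have hb : (q - 1, 1) ∈ Bad q x⁻¹ := h.is_bad_inv (by rw [pow_one]; omega)
  ext ⟨m, e⟩
  rw [mem_Bf (PL_finite hq hx)]
  simp only [Finset.mem_insert, Finset.mem_singleton, Prod.mk.injEq]
  constructor
  · intro hm
    by_contra hc
    refine h.good_inv hx hm.1 ?_ hm
    · rintro ⟨h1, h2⟩
      have : e = 0 ∨ e = 1 := by omega
      rcases this with rfl | rfl
      · simp at h1; omega
      · rw [pow_one] at h1; omega
  · rintro (⟨rfl, rfl⟩ | ⟨rfl, rfl⟩)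
    · exact bad_root hq hb
    · exact hb

theorem Gen.bf2 {q : ℕ} {x : Equiv.Perm ℝ} (h : Gen q 2 (q - 1) x) :
    Bf q x = {(0, 0), (q - 1, 1), ((q - 1) * q, 2)} := by
  have hq := h.hq
  obtain ⟨r, rfl⟩ : ∃ r, q = r + 1 := ⟨q - 1, by omega⟩
  simp only [Nat.add_sub_cancel] at h ⊢
  have hb : (r * (r + 1), 2) ∈ Bad (r + 1) x := h.is_bad (by ring)
  have hb1 : (r, 1) ∈ Bad (r + 1) x := by
    have := bad_anc (d := 1) (j := 1) hq hb
    rwa [pow_one, Nat.mul_div_cancel _ (by omega)] at this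
  ext ⟨m, e⟩
  rw [mem_Bf (PL_finite hq h.mem)]
  simp only [Finset.mem_insert, Finset.mem_singleton, Prod.mk.injEq]
  constructor
  · intro hm
    by_contra hc
    refine h.good hm.1 ?_ ?_ hm
    · rintro ⟨h1, h2⟩
      have : e = 0 ∨ e = 1 := by omega
      rcases this with rfl | rfl
      · simp at h1; omega
      · rw [pow_one] at h1; omega
    · rintro ⟨rfl, h2⟩
      have : m = r * (r + 1) := by nlinarith
      omega
  · rintro (⟨rfl, rfl⟩ | ⟨rfl, rfl⟩ | ⟨rfl, rfl⟩)
    · exact bad_root hq hb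
    · exact hb1
    · exact hb

theorem Gen.bf2_inv {q g : ℕ} {x : Equiv.Perm ℝ} (h : Gen q 2 g x) (hx : x⁻¹ ∈ PLSet q) :
    Bf q x⁻¹ ⊆ {(0, 0), (q - 1, 1), (q ^ 2 - 1, 2)} := by
  have hq := h.hq
  rintro ⟨m, e⟩ hm
  rw [mem_Bf (PL_finite hq hx)] at hm
  simp only [Finset.mem_insert, Finset.mem_singleton, Prod.mk.injEq]
  by_contra hc
  refine h.good_inv hx hm.1 ?_ hm
  rintro ⟨h1, h2⟩
  have : e = 0 ∨ e = 1 ∨ e = 2 := by omega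
  rcases this with rfl | rfl | rfl
  · simp at h1; omega
  · rw [pow_one] at h1; omega
  · have h1 : m + 1 = q ^ 2 := h1
    omega

/-- the ambient data for the rewriting procedure -/
structure Ctx (q : ℕ) (H : Subgroup (Equiv.Perm ℝ)) (l : Equiv.Perm ℝ → ℕ) (M : ℕ)
    (X : ℕ → Equiv.Perm ℝ) (Y : Equiv.Perm ℝ) : Prop where
  hq : 2 ≤ q
  hH : (H : Set (Equiv.Perm ℝ)) = PLSet q
  hl : ∀ f ∈ PLSet q, ∀ g ∈ PLSet q, l (f * g) ≤ l f + l g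
  hX : ∀ g, 1 ≤ g → g < q → Gen q 1 g (X g)
  hY : Gen q 2 (q - 1) Y
  lX : ∀ g, 1 ≤ g → g < q → l (X g) ≤ M
  lX' : ∀ g, 1 ≤ g → g < q → l (X g)⁻¹ ≤ M
  lY : l Y ≤ M

variable {q : ℕ} {H : Subgroup (Equiv.Perm ℝ)} {l : Equiv.Perm ℝ → ℕ} {M : ℕ}
    {X : ℕ → Equiv.Perm ℝ} {Y : Equiv.Perm ℝ}

theorem Ctx.mul (C : Ctx q H l M X Y) {f g : Equiv.Perm ℝ} (hf : f ∈ PLSet q) (hg : g ∈ PLSet q) :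
    f * g ∈ PLSet q := by
  rw [← C.hH] at *; exact H.mul_mem hf hg

theorem Ctx.inv (C : Ctx q H l M X Y) {f : Equiv.Perm ℝ} (hf : f ∈ PLSet q) : f⁻¹ ∈ PLSet q := by
  rw [← C.hH] at *; exact H.inv_mem hf

theorem Ctx.len (C : Ctx q H l M X Y) {f x : Equiv.Perm ℝ} (hf : f ∈ PLSet q) (hx : x ∈ PLSet q)
    (hM : l x ≤ M) : l f ≤ l (f * x⁻¹) + M := by
  have := C.hl _ (C.mul hf (C.inv hx)) _ hx
  rw [inv_mul_cancel_right] at this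
  omega

theorem Ctx.msum (C : Ctx q H l M X Y) {f x : Equiv.Perm ℝ} (hf : f ∈ PLSet q) (hx : x ∈ PLSet q)
    (hs : Bad q x ⊆ Bad q f)
    (w : ℕ × ℕ → ℕ) (hw : ∀ I J, Aff q x I J → w J = w I) :
    ∑ I ∈ Bf q (f * x⁻¹), w I + ∑ I ∈ Bf q x, w I ≤ ∑ I ∈ Bf q f, w I + ∑ I ∈ Bf q x⁻¹, w I :=
  move_sum C.hq (PL_finite C.hq hf) (PL_finite C.hq hx) (PL_finite C.hq (C.inv hx)) hs w hw

theorem bad_sub {f x : Equiv.Perm ℝ} (hq : 2 ≤ q) (hx : x ∈ PLSet q)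
    (h : ∀ I ∈ Bf q x, I ∈ Bad q f) : Bad q x ⊆ Bad q f :=
  fun I hI => h I ((mem_Bf (PL_finite hq hx)).2 hI)

theorem Ctx.phase1 (C : Ctx q H l M X Y) : ∀ (N : ℕ) (f : Equiv.Perm ℝ), f ∈ PLSet q →
    ∑ I ∈ Bf q f, wl I ≤ N → ∃ f' ∈ PLSet q, (0, 1) ∉ Bad q f' ∧ (Bf q f').card ≤ (Bf q f).card ∧
      Bad q f'⁻¹ ⊆ Bad q f⁻¹ ∧ l f ≤ l f' + M * N := by
  intro N
  have hq := C.hq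
  induction N with
  | zero =>
    intro f hf hN
    refine ⟨f, hf, fun hb => ?_, le_rfl, subset_rfl, by omega⟩
    have := Finset.single_le_sum (f := wl) (fun _ _ => Nat.zero_le _) ((mem_Bf (PL_finite hq hf)).2 hb)
    simp [wl] at this hN
    exact hN _ _ ((mem_Bf (PL_finite hq hf)).2 hb) rfl
  | succ N ih =>
    intro f hf hN
    by_cases hb : (0, 1) ∈ Bad q f
    · have G := C.hX (q - 1) (by omega) (by omega)
      have b1 := G.bf1 (n := 0) (by omega)
      have b2 := G.bf1_inv (C.inv G.mem)
      set x := X (q - 1)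
      have hs : Bad q x ⊆ Bad q f := by
        refine bad_sub hq G.mem fun I hI => ?_
        rw [b1] at hI
        simp only [Finset.mem_insert, Finset.mem_singleton] at hI
        rcases hI with rfl | rfl
        · exact bad_root hq hb
        · exact hb
      have m1 := C.msum hf G.mem hs wl (wl_aff hq G.mem)
      have m2 := C.msum hf G.mem hs (fun _ => 1) (fun _ _ _ => rfl)
      simp only [Finset.sum_const, smul_eq_mul, mul_one] at m2
      rw [b1, b2] at m1 m2
      have hne : q - 1 ≠ 0 := by omega
      rw [Finset.sum_pair (by simp), Finset.sum_pair (by simp)] at m1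
      simp only [wl, if_true, hne, if_false] at m1
      rw [Finset.card_pair (by simp), Finset.card_pair (by simp)] at m2
      obtain ⟨f', h1, h2, h3, h4, h5⟩ := ih (f * x⁻¹) (C.mul hf (C.inv G.mem)) (by simp only [wl] at hN ⊢; omega)
      refine ⟨f', h1, h2, by omega, h4.trans (move_bad_inv hs), ?_⟩
      have := C.len hf G.mem (C.lX (q - 1) (by omega) (by omega))
      rw [mul_add, mul_one]
      omega
    · refine ⟨f, hf, hb, le_rfl, subset_rfl, by omega⟩

/-- bad nodes below the first child of the root lie on the left spine -/
def Inv (q : ℕ) (f : Equiv.Perm ℝ) : Prop := ∀ n d, (n, d + 1) ∈ Bad q f → n < q ^ d → n = 0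

theorem inv_of_good (hq : 2 ≤ q) {f : Equiv.Perm ℝ} (h : (0, 1) ∉ Bad q f) : Inv q f := by
  intro n d hn hlt
  rw [add_comm] at hn
  have := bad_anc hq hn
  rw [Nat.div_eq_of_lt hlt] at this
  exact absurd this h

theorem inv_move (hq : 2 ≤ q) {f x : Equiv.Perm ℝ} (hx : ∀ t : ℝ, t ≤ 1 / q → x⁻¹ t = t)
    (h : Inv q f) : Inv q (f * x⁻¹) := by
  intro n d hn hlt
  have hq0 : (0 : ℝ) < q := by positivity
  rcases bad_mul hn with h' | ⟨J, hJ, hA⟩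
  · exfalso
    refine h'.2 ⟨(n, d + 1), h'.1, h'.1, fun t h0 h1 => hx _ ?_⟩
    simp only
    rw [pow_succ, div_le_div_iff₀ (by positivity) hq0, one_mul]
    have : (n : ℝ) + 1 ≤ q ^ d := by exact_mod_cast hlt
    gcongr
    linarith
  · have : Aff q x⁻¹ (n, d + 1) (n, d + 1) := by
      refine ⟨hn.1, hn.1, fun t h0 h1 => hx _ ?_⟩
      simp only
      rw [pow_succ, div_le_div_iff₀ (by positivity) hq0, one_mul]
      have : (n : ℝ) + 1 ≤ q ^ d := by exact_mod_cast hlt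
      gcongr
      linarith
    rw [← Aff.uniq hq this hA] at hJ
    exact h n d hJ hlt

/-- the inverse rotation at the root preserves the invariant -/
theorem inv_rot {f x : Equiv.Perm ℝ} (G : Gen q 1 (q - 1) x) (h : Inv q f)
    (h1 : ∀ i, 1 ≤ i → i + 1 < q → (i, 1) ∉ Bad q f) (h2 : ((q - 1) * q, 2) ∉ Bad q f) :
    Inv q (f * x) := by
  have hq := G.hq
  have hq0 : (0 : ℝ) < q := by positivity
  have hqc : ((q - 1 : ℕ) : ℝ) = q - 1 := by rw [Nat.cast_sub (by omega)]; simp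
  have hq1 : (1 : ℝ) ≤ q := by exact_mod_cast (by omega : 1 ≤ q)
  have r2 := G.r2
  have r3 := G.r3
  rw [hqc] at r2 r3
  intro n d hn hlt
  rcases d with _ | d
  · simpa using hlt
  have hj : n / q ^ d < q := Nat.div_lt_of_lt_mul (by rw [← pow_succ]; exact hlt)
  have hpd := pow_pos hq0 d
  by_cases hc : n / q ^ d + 1 < q
  · have hnle : n + 1 ≤ (q - 1) * q ^ d := by
      have := Nat.lt_mul_div_succ n (Nat.pow_pos (n := d) (by omega : 0 < q))
      calc n + 1 ≤ q ^ d * (n / q ^ d + 1) := this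
        _ ≤ q ^ d * (q - 1) := Nat.mul_le_mul_left _ (by omega)
        _ = _ := mul_comm _ _
    have hnle' : (n : ℝ) + 1 ≤ (q - 1) * q ^ d := by rw [← hqc]; exact_mod_cast hnle
    have hA : Aff q x (n, d + 1 + 1) (n, d + 1) := by
      refine Aff.of_affine hq hn.1 hlt q 0 (by ring) (by rw [pow_succ (q : ℝ) (d + 1)]; field_simp; ring) fun y hy1 hy2 => ?_
      rw [r2 y]
      · simp; field_simp; simp
      · refine le_trans (le_of_eq ?_) (le_trans (by positivity) hy1)
        field_simp; ring
      · refine hy2.trans ?_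
        have : 1 - ((q : ℝ) * ((q - 1) + 1) - (q - 1)) / q ^ (1 + 1) = (q - 1) / q ^ 2 := by
          field_simp; ring
        rw [this, div_le_div_iff₀ (by positivity) (by positivity)]
        calc ((n : ℝ) + 1) * q ^ 2 ≤ (q - 1) * q ^ d * q ^ 2 := by gcongr
          _ = _ := by ring
    have hb : (n, d + 1) ∈ Bad q f := ⟨hlt, fun ⟨K, hK⟩ => hn.2 ⟨K, hA.comp hK⟩⟩
    rcases Nat.eq_zero_or_pos (n / q ^ d) with h0 | h0
    · have : n < q ^ d := by
        rwa [Nat.div_eq_zero_iff_lt (Nat.pow_pos (by omega))] at h0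
      exact h n d hb this
    · have hb' : (n, 1 + d) ∈ Bad q f := by rwa [add_comm]
      exact absurd (bad_anc hq hb') (h1 _ h0 hc)
  · exfalso
    have hje : n / q ^ d = q - 1 := by omega
    have hge : (q - 1) * q ^ d ≤ n := by rw [← hje]; exact Nat.div_mul_le_self _ _
    have hge' : ((q : ℝ) - 1) * q ^ d ≤ n := by rw [← hqc]; exact_mod_cast hge
    have hlt' : (n : ℝ) + 1 ≤ q ^ (d + 1) := by exact_mod_cast hlt
    set m := n + (q - 1) * (q - 1) * q ^ d with hm
    have hmlt : m < q ^ (d + 1 + 1) := by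
      obtain ⟨r, hr⟩ : ∃ r, q = r + 1 := ⟨q - 1, by omega⟩
      have e : q ^ (d + 1 + 1) = q ^ (d + 1) + (q - 1) * (q - 1) * q ^ d + (q - 1) * q ^ d := by
        rw [hr]; simp only [Nat.add_sub_cancel]; ring
      rw [e, hm]; omega
    have hA : Aff q x (n, d + 1 + 1) (m, d + 1 + 1) := by
      refine Aff.of_affine hq hn.1 hmlt 1 ((q - 1) * (q - 1) / q ^ 2) (by ring) ?_ fun y hy1 hy2 => ?_
      · rw [hm]; push_cast; rw [hqc]; field_simp; ring
      rw [r3 y]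
      · simp
      · refine le_trans ?_ hy1
        have : 1 - ((q : ℝ) * ((q - 1) + 1) - (q - 1)) / q ^ (1 + 1) = (q - 1) / q ^ 2 := by
          field_simp; ring
        rw [this, div_le_div_iff₀ (by positivity) (by positivity)]
        calc _ = ((q : ℝ) - 1) * q ^ d * q ^ 2 := by ring
          _ ≤ _ := by gcongr
      · refine hy2.trans ?_
        have : 1 - ((q : ℝ) - 1) / q ^ 1 = 1 / q := by field_simp; ring
        rw [this, div_le_div_iff₀ (by positivity) (by positivity)]
        calc ((n : ℝ) + 1) * q ≤ q ^ (d + 1) * q := by gcongr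
          _ = _ := by ring
    have hb : (m, d + 1 + 1) ∈ Bad q f := ⟨hmlt, fun ⟨K, hK⟩ => hn.2 ⟨K, hA.comp hK⟩⟩
    have hb' : (m, 2 + d) ∈ Bad q f := by rwa [show 2 + d = d + 1 + 1 by ring]
    have := bad_anc hq hb'
    rw [hm, Nat.add_mul_div_right _ _ (Nat.pow_pos (by omega)), hje] at this
    apply h2
    have e : (q - 1) * q = q - 1 + (q - 1) * (q - 1) := by
      obtain ⟨r, hr⟩ : ∃ r, q = r + 1 := ⟨q - 1, by omega⟩
      rw [hr]; simp only [Nat.add_sub_cancel]; ring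
    rwa [e]

theorem Ctx.phase2 (C : Ctx q H l M X Y) : ∀ (N : ℕ) (f : Equiv.Perm ℝ), f ∈ PLSet q → Inv q f →
    ∑ I ∈ Bf q f, w2 q I ≤ N → ∃ f' ∈ PLSet q, (∀ I ∈ Bad q f', I.1 = 0) ∧
      Bad q f'⁻¹ ⊆ Bad q f⁻¹ ∧ l f ≤ l f' + M * N := by
  intro N
  have hq := C.hq
  have hq0 : (0 : ℝ) < q := by positivity
  have hq1 : (1 : ℝ) ≤ q := by exact_mod_cast (by omega : 1 ≤ q)
  have hqc : ((q - 1 : ℕ) : ℝ) = q - 1 := by rw [Nat.cast_sub (by omega)]; simp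
  induction N using Nat.strong_induction_on with
  | _ N ih =>
  intro f hf hI hN
  -- it suffices to find a move that reduces the weight
  have step : ∀ x ∈ PLSet q, l x ≤ M → Bad q x ⊆ Bad q f → Inv q (f * x⁻¹) →
      ∑ I ∈ Bf q x⁻¹, w2 q I + 1 ≤ ∑ I ∈ Bf q x, w2 q I → ∃ f' ∈ PLSet q, (∀ I ∈ Bad q f', I.1 = 0) ∧
      Bad q f'⁻¹ ⊆ Bad q f⁻¹ ∧ l f ≤ l f' + M * N := by
    intro x hx hlx hs hinv hw
    have m1 := C.msum hf hx hs (w2 q) (w2_aff hq hx)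
    obtain ⟨f', h1, h2, h3, h4⟩ := ih (N - 1) (by omega) (f * x⁻¹) (C.mul hf (C.inv hx)) hinv (by omega)
    refine ⟨f', h1, h2, h3.trans (move_bad_inv hs), ?_⟩
    have h5 := C.len hf hx hlx
    obtain ⟨N', rfl⟩ : ∃ N', N = N' + 1 := ⟨N - 1, by omega⟩
    rw [mul_add, mul_one]
    simp only [Nat.add_sub_cancel] at h4
    omega
  have hne : q - 1 ≠ 0 := by omega
  have hq11 : q - 1 + 1 = q := by omega
  have w00 : w2 q (0, 0) = 0 := by simp [w2]
  have w01 : w2 q (0, 1) = 0 := by simp [w2]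
  have wq1 : w2 q (q - 1, 1) = 1 := by simp [w2, hne, hq11]
  by_cases c1 : ∃ i, 1 ≤ i ∧ i + 1 < q ∧ (i, 1) ∈ Bad q f
  · obtain ⟨i, hi1, hi2, hb⟩ := c1
    have G := C.hX (q - 1 - i) (by omega) (by omega)
    have b1 := G.bf1 (n := i) (by omega)
    have b2 := G.bf1_inv (C.inv G.mem)
    refine step _ G.mem (C.lX _ (by omega) (by omega)) ?_ (inv_move hq (fun t ht => ?_) hI) ?_
    · refine bad_sub hq G.mem fun I hI => ?_
      rw [b1] at hI
      simp only [Finset.mem_insert, Finset.mem_singleton] at hI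
      rcases hI with rfl | rfl
      · exact bad_root hq hb
      · exact hb
    · apply G.inv1
      refine ht.trans ?_
      have : ((q - 1 - i : ℕ) : ℝ) = q - 1 - i := by
        rw [Nat.cast_sub (by omega), hqc]
      have hi1' : (1 : ℝ) ≤ i := by exact_mod_cast hi1
      rw [this, pow_one, div_le_iff₀ hq0, sub_mul, div_mul_cancel₀ _ hq0.ne']
      linarith
    · have : w2 q (i, 1) = 2 := by
        simp only [w2, pow_one]
        rw [if_neg (by omega), if_neg (by omega)]
      rw [b1, b2, Finset.sum_pair (by simp), Finset.sum_pair (by simp), w00, wq1, this]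
  by_cases c2 : (q - 1, 1) ∈ Bad q f
  · by_cases c3 : ((q - 1) * q, 2) ∈ Bad q f
    · have G := C.hY
      have b1 := G.bf2
      have b2 := G.bf2_inv (C.inv G.mem)
      refine step _ G.mem C.lY ?_ (inv_move hq (fun t ht => ?_) hI) ?_
      · refine bad_sub hq G.mem fun I hI => ?_
        rw [b1] at hI
        simp only [Finset.mem_insert, Finset.mem_singleton] at hI
        rcases hI with rfl | rfl | rfl
        · exact bad_root hq c2
        · exact c2
        · exact c3
      · apply G.inv1
        refine ht.trans ?_
        rw [hqc]
        have : (2 : ℝ) ≤ q := by exact_mod_cast hq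
        have e : 1 - ((q : ℝ) - 1 + 1) / q ^ 2 = (q - 1) / q := by field_simp; ring
        rw [e]; gcongr; linarith
      · have e1 : w2 q ((q - 1) * q, 2) = 2 := by
          simp only [w2]
          obtain ⟨r, hr⟩ : ∃ r, q = r + 2 := ⟨q - 2, by omega⟩
          rw [if_neg (by simp; omega), if_neg]
          rw [hr]; simp only [Nat.add_succ_sub_one]
          intro h
          have : (r + 2) ^ 2 = (r + 1) * (r + 2) + 1 + (r + 1) := by ring
          omega
        have e2 : w2 q (q ^ 2 - 1, 2) = 1 := by
          have : 2 * 2 ≤ q ^ 2 := by rw [pow_two]; exact Nat.mul_le_mul hq hq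
          simp only [w2]
          rw [if_neg (by omega), if_pos (by omega)]
        have m2 := Finset.sum_le_sum_of_subset (f := w2 q) b2
        rw [Finset.sum_insert (by simp), Finset.sum_pair (by simp), w00, wq1, e2] at m2
        rw [b1, Finset.sum_insert (by simp), Finset.sum_pair (by simp), w00, wq1, e1]
        omega
    · have G := C.hX (q - 1) (by omega) (by omega)
      have b1 := G.bf1 (n := 0) (by omega)
      have b2 := G.bf1_inv (C.inv G.mem)
      refine step _ (C.inv G.mem) (C.lX' _ (by omega) (by omega)) ?_ ?_ ?_
      · refine bad_sub hq (C.inv G.mem) fun I hI => ?_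
        rw [b2] at hI
        simp only [Finset.mem_insert, Finset.mem_singleton] at hI
        rcases hI with rfl | rfl
        · exact bad_root hq c2
        · exact c2
      · rw [inv_inv]
        push Not at c1
        exact inv_rot G hI c1 c3
      · rw [inv_inv, b1, b2, Finset.sum_pair (by simp), Finset.sum_pair (by simp), w00, wq1, w01]
  · refine ⟨f, hf, ?_, subset_rfl, by omega⟩
    rintro ⟨n, d⟩ hb
    rcases d with _ | d
    · have := hb.1; simpa using this
    have hb' : (n, 1 + d) ∈ Bad q f := by rwa [add_comm]
    have ha := bad_anc hq hb'
    have hlt := ha.1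
    simp only [pow_one] at hlt
    refine hI n d hb ?_
    have h0 : n / q ^ d = 0 := by
      by_contra h0
      by_cases h' : n / q ^ d + 1 < q
      · exact c1 ⟨_, Nat.pos_of_ne_zero h0, h', ha⟩
      · rw [show n / q ^ d = q - 1 by omega] at ha
        exact c2 ha
    rwa [Nat.div_eq_zero_iff_lt (Nat.pow_pos (by omega))] at h0


theorem fix_step {n d : ℕ} (hq : 2 ≤ q) {f : Equiv.Perm ℝ} (hf : f ∈ PLSet q) (hn : 1 ≤ n) (hnq : n < q)
    {J : ℕ × ℕ} (h : Aff q f (n, d) J) (hr : f (((n : ℝ) + 1) / q ^ d) = ((n : ℝ) + 1) / q ^ d) :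
    (∀ y : ℝ, (n : ℝ) / q ^ d ≤ y → y ≤ (n + 1) / q ^ d → f y = y) ∨
      (n : ℝ) / q ^ d < f ((n : ℝ) / q ^ d) := by
  obtain ⟨m, e⟩ := J
  have hq0 : (0 : ℝ) < q := by positivity
  have hq1 : (1 : ℝ) < q := by exact_mod_cast hq
  have h1 := h.2.2 1 zero_le_one le_rfl
  have h0 := h.2.2 0 le_rfl zero_le_one
  simp only [add_zero] at h0 h1
  rw [hr] at h1
  have hd := pow_pos hq0 d
  have he := pow_pos hq0 e
  rcases lt_trichotomy e d with hlt | rfl | hlt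
  · exfalso
    obtain ⟨s, rfl⟩ := Nat.exists_eq_add_of_lt hlt
    have e1 : ((m : ℝ) + 1) * q ^ (s + 1) = n + 1 := by
      rw [div_eq_div_iff hd.ne' he.ne'] at h1
      have : ((q : ℝ) ^ e) * (((m : ℝ) + 1) * q ^ (s + 1)) = q ^ e * (n + 1) := by
        rw [mul_comm _ ((n : ℝ) + 1), h1]; ring
      exact mul_left_cancel₀ he.ne' this
    have e2 : (m + 1) * q ^ (s + 1) = n + 1 := by exact_mod_cast e1
    have e3 : q ≤ q ^ (s + 1) := Nat.le_self_pow (by omega) q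
    have hm : m = 0 := by
      by_contra hm
      have : 2 * q ≤ (m + 1) * q ^ (s + 1) := Nat.mul_le_mul (by omega) e3
      omega
    rw [hm, Nat.cast_zero, zero_div, ← PL_zero hf] at h0
    have := f.injective h0
    have hn0 : (0 : ℝ) < n := by exact_mod_cast hn
    have : (0 : ℝ) < n / q ^ (e + s + 1) := by positivity
    linarith
  · left
    have hm : (m : ℝ) = n := by
      rw [div_left_inj' hd.ne'] at h1; linarith
    intro y hy1 hy2
    rw [h.slope hq hy1 hy2, hm, div_self hd.ne']; ring
  · right
    rw [h0]
    have : (1 : ℝ) / q ^ e < 1 / q ^ d :=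
      one_div_lt_one_div_of_lt hd (pow_lt_pow_right₀ hq1 hlt)
    rw [add_div, add_div] at h1
    linarith

theorem fix_all (hq : 2 ≤ q) {f : Equiv.Perm ℝ} (hf : f ∈ PLSet q) (hf' : f⁻¹ ∈ PLSet q)
    (h : ∀ I ∈ Bad q f, I.1 = 0) (h' : ∀ I ∈ Bad q f⁻¹, I.1 = 0) : f = 1 := by
  have hq0 : (0 : ℝ) < q := by positivity
  have hq1 : (1 : ℝ) < q := by exact_mod_cast hq
  have key : ∀ j i : ℕ, i + 1 ≤ q → (∀ t : ℝ, ((q : ℝ)) / q ^ (j + 1) ≤ t → f t = t) →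
      ∀ t : ℝ, ((q : ℝ) - i) / q ^ (j + 1) ≤ t → f t = t := by
    intro j i
    induction i with
    | zero => intro _ h0 t ht; apply h0; simpa using ht
    | succ i ih =>
      intro hi h0 t ht
      have ih := ih (by omega) h0
      obtain ⟨n, hn⟩ : ∃ n : ℕ, q = n + (i + 1) := ⟨q - (i + 1), by omega⟩
      have hd := pow_pos hq0 (j + 1)
      have hqr : (q : ℝ) = n + (i + 1) := by exact_mod_cast hn
      have er : ((q : ℝ) - i) / q ^ (j + 1) = ((n : ℝ) + 1) / q ^ (j + 1) := by
        congr 1; rw [hqr]; ring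
      have el : ((q : ℝ) - (i + 1 : ℕ)) / q ^ (j + 1) = (n : ℝ) / q ^ (j + 1) := by
        congr 1; rw [hqr]; push_cast; ring
      rw [er] at ih
      rw [el] at ht
      rcases le_total (((n : ℝ) + 1) / q ^ (j + 1)) t with ht' | ht'
      · exact ih t ht'
      have hr := ih _ le_rfl
      have hr' : f⁻¹ (((n : ℝ) + 1) / q ^ (j + 1)) = ((n : ℝ) + 1) / q ^ (j + 1) := by
        rw [Equiv.Perm.inv_eq_iff_eq, hr]
      have hnq : n < q := by omega
      have hn1 : 1 ≤ n := by omega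
      have hlt : n < q ^ (j + 1) := hnq.trans_le (Nat.le_self_pow (by omega) q)
      have g1 : (n, j + 1) ∉ Bad q f := fun hb => by have := h _ hb; simp only at this; omega
      have g2 : (n, j + 1) ∉ Bad q f⁻¹ := fun hb => by have := h' _ hb; simp only at this; omega
      obtain ⟨J, hJ⟩ := (not_bad hlt).1 g1
      obtain ⟨K, hK⟩ := (not_bad hlt).1 g2
      rcases fix_step hq hf hn1 hnq hJ hr with c | c
      · exact c t ht ht'
      rcases fix_step hq hf' hn1 hnq hK hr' with c' | c'
      · have := c' t ht ht'
        rw [Equiv.Perm.inv_eq_iff_eq] at this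
        exact this.symm
      · have := PL_strict hf c'
        rw [show f (f⁻¹ ((n : ℝ) / q ^ (j + 1))) = (n : ℝ) / q ^ (j + 1) from f.apply_symm_apply _] at this
        linarith
  have all : ∀ j : ℕ, ∀ t : ℝ, ((q : ℝ)) / q ^ (j + 1) ≤ t → f t = t := by
    intro j
    induction j with
    | zero => intro t ht; apply hf.2.2.1; simpa [hq0.ne'] using ht
    | succ j ih =>
      intro t ht
      refine key j (q - 1) (by omega) ih t ?_
      refine le_trans (le_of_eq ?_) ht
      rw [Nat.cast_sub (by omega)]
      field_simp
      push_cast; ring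
  ext t
  rw [Equiv.Perm.one_apply]
  rcases le_or_gt t 0 with h0 | h0
  · exact hf.2.1 t h0
  obtain ⟨j, hj⟩ := exists_pow_lt_of_lt_one h0 (inv_lt_one_of_one_lt₀ hq1)
  refine all j t (le_trans (le_of_eq ?_) hj.le)
  rw [inv_pow]; field_simp; ring

theorem bad_one : Bad q 1 = ∅ := by
  ext I
  simp only [Bad, Set.mem_ofPred_eq, Set.mem_empty_iff_false, iff_false, not_and, not_not]
  exact fun hI => ⟨I, hI, hI, fun t _ _ => rfl⟩

theorem wl_sum (s : Finset (ℕ × ℕ)) : ∑ I ∈ s, wl I ≤ s.card := by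
  rw [Finset.card_eq_sum_ones]
  exact Finset.sum_le_sum fun I _ => by unfold wl; split_ifs <;> simp

theorem w2_sum (s : Finset (ℕ × ℕ)) : ∑ I ∈ s, w2 q I ≤ 2 * s.card := by
  rw [Finset.card_eq_sum_ones, Finset.mul_sum]
  exact Finset.sum_le_sum fun I _ => by unfold w2; split_ifs <;> simp

theorem Ctx.reduce (C : Ctx q H l M X Y) {f : Equiv.Perm ℝ} (hf : f ∈ PLSet q) :
    ∃ f' ∈ PLSet q, (∀ I ∈ Bad q f', I.1 = 0) ∧ Bad q f'⁻¹ ⊆ Bad q f⁻¹ ∧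
      l f ≤ l f' + M * (3 * (Bf q f).card) := by
  obtain ⟨f1, h1, hb, hc, hi, hl1⟩ := C.phase1 _ f hf (wl_sum _)
  obtain ⟨f2, h2, hb2, hi2, hl2⟩ := C.phase2 _ f1 h1 (inv_of_good C.hq hb) (w2_sum _)
  refine ⟨f2, h2, hb2, hi2.trans hi, ?_⟩
  have : M * (2 * (Bf q f1).card) ≤ M * (2 * (Bf q f).card) := by gcongr
  have e : M * (3 * (Bf q f).card) = M * (2 * (Bf q f).card) + M * (Bf q f).card := by ring
  omega

theorem Ctx.bound (C : Ctx q H l M X Y) (l1 : l 1 = 0) (li : ∀ f ∈ PLSet q, l f⁻¹ = l f)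
    {f : Equiv.Perm ℝ} (hf : f ∈ PLSet q) :
    l f ≤ M * (3 * ((Bf q f).card + (Bf q f⁻¹).card)) := by
  obtain ⟨f', h1, hb, hi, hl⟩ := C.reduce hf
  obtain ⟨g, h2, hb2, hi2, hl2⟩ := C.reduce (C.inv h1)
  have hg : g = 1 := by
    refine fix_all C.hq h2 (C.inv h2) hb2 fun I hI => hb I ?_
    have := hi2 hI
    rwa [inv_inv] at this
  rw [hg, l1, li _ h1] at hl2
  have hc : (Bf q f'⁻¹).card ≤ (Bf q f⁻¹).card := by
    refine Finset.card_le_card fun I hI => ?_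
    rw [mem_Bf (PL_finite C.hq (C.inv hf))]
    exact hi ((mem_Bf (PL_finite C.hq (C.inv h1))).1 hI)
  have : M * (3 * (Bf q f'⁻¹).card) ≤ M * (3 * (Bf q f⁻¹).card) := by gcongr
  rw [Nat.mul_add 3, Nat.mul_add]
  omega

section WL
variable {G : Type*} [Group G] {S : Set G}

theorem wl_le {w : List G} (hw : ∀ g ∈ w, g ∈ S ∨ g⁻¹ ∈ S) : wordLength S w.prod ≤ w.length :=
  Nat.sInf_le ⟨w, rfl, hw, rfl⟩

theorem wl_word {x : G} (hx : x ∈ Subgroup.closure S) :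
    ∃ w : List G, w.length = wordLength S x ∧ (∀ g ∈ w, g ∈ S ∨ g⁻¹ ∈ S) ∧ w.prod = x := by
  have hx' : x ∈ Submonoid.closure (S ∪ S⁻¹) := by
    rw [← Subgroup.closure_toSubmonoid]; exact hx
  obtain ⟨w, hw, hp⟩ := Submonoid.exists_list_of_mem_closure hx'
  exact Nat.sInf_mem (s := { n : ℕ | ∃ w : List G, w.length = n ∧ (∀ g ∈ w, g ∈ S ∨ g⁻¹ ∈ S) ∧ w.prod = x })
    ⟨w.length, w, rfl, fun g hg => by simpa using hw g hg, hp⟩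

theorem wl_one : wordLength S (1 : G) = 0 := by
  have := wl_le (S := S) (w := []) (by simp)
  simpa using this

theorem wl_mul {x y : G} (hx : x ∈ Subgroup.closure S) (hy : y ∈ Subgroup.closure S) :
    wordLength S (x * y) ≤ wordLength S x + wordLength S y := by
  obtain ⟨u, h1, h2, h3⟩ := wl_word hx
  obtain ⟨v, g1, g2, g3⟩ := wl_word hy
  rw [← h1, ← g1, ← List.length_append, ← h3, ← g3, ← List.prod_append]
  apply wl_le
  intro g hg
  rcases List.mem_append.1 hg with h | h
  · exact h2 g h
  · exact g2 g h

theorem wl_inv_le {x : G} (hx : x ∈ Subgroup.closure S) : wordLength S x⁻¹ ≤ wordLength S x := by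
  obtain ⟨u, h1, h2, h3⟩ := wl_word hx
  rw [← h1, ← h3, List.prod_inv_reverse]
  refine (wl_le ?_).trans (by simp)
  intro g hg
  simp only [List.mem_reverse, List.mem_map] at hg
  obtain ⟨a, ha, rfl⟩ := hg
  rw [inv_inv]
  exact (h2 a ha).symm

theorem wl_inv {x : G} (hx : x ∈ Subgroup.closure S) : wordLength S x⁻¹ = wordLength S x := by
  refine le_antisymm (wl_inv_le hx) ?_
  have := wl_inv_le (inv_mem hx)
  rwa [inv_inv] at this

theorem wl_bound {m : G → ℕ} {c : ℕ} (m1 : m 1 = 0)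
    (mm : ∀ x ∈ Subgroup.closure S, ∀ y ∈ Subgroup.closure S, m (x * y) ≤ m x + m y)
    (mc : ∀ s, s ∈ S ∨ s⁻¹ ∈ S → m s ≤ c) {x : G} (hx : x ∈ Subgroup.closure S) :
    m x ≤ c * wordLength S x := by
  obtain ⟨u, h1, h2, h3⟩ := wl_word hx
  rw [← h1, ← h3]
  clear h1 h3 hx
  have hm : ∀ g, g ∈ S ∨ g⁻¹ ∈ S → g ∈ Subgroup.closure S := by
    rintro g (h | h)
    · exact Subgroup.subset_closure h
    · simpa using inv_mem (Subgroup.subset_closure h)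
  induction u with
  | nil => simp [m1]
  | cons a u ih =>
    have ha := h2 a (by simp)
    have hu : ∀ g ∈ u, g ∈ S ∨ g⁻¹ ∈ S := fun g hg => h2 g (by simp [hg])
    have := mm a (hm a ha) u.prod (Subgroup.list_prod_mem _ fun g hg => hm g (hu g hg))
    have := mc a ha
    have := ih hu
    rw [List.prod_cons, List.length_cons, Nat.mul_add]
    omega

theorem fin_bound (S : Finset G) (m : G → ℕ) :
    ∃ c, ∀ s, s ∈ (S : Set G) ∨ s⁻¹ ∈ (S : Set G) → m s ≤ c := by
  refine ⟨S.sup m + S.sup fun s => m s⁻¹, ?_⟩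
  rintro s (h | h)
  · exact (Finset.le_sup (f := m) h).trans (by omega)
  · have := Finset.le_sup (f := fun s => m s⁻¹) h
    simp only [inv_inv] at this
    omega

end WL

theorem main_lower {p k : ℕ} (hp : 2 ≤ p) (hk : 1 ≤ k) (S T : Finset (Equiv.Perm ℝ))
    (hS : ((Subgroup.closure (S : Set (Equiv.Perm ℝ)) : Subgroup (Equiv.Perm ℝ)) :
            Set (Equiv.Perm ℝ)) = PLSet (p ^ k))
    (hT : ((Subgroup.closure (T : Set (Equiv.Perm ℝ)) : Subgroup (Equiv.Perm ℝ)) :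
            Set (Equiv.Perm ℝ)) = PLSet p) :
    ∃ C : ℕ, ∀ x ∈ PLSet (p ^ k), wordLength (S : Set (Equiv.Perm ℝ)) x ≤
      C * wordLength (T : Set (Equiv.Perm ℝ)) x := by
  have hq : 2 ≤ p ^ k := hp.trans (Nat.le_self_pow (by omega) p)
  have mS : ∀ x, x ∈ Subgroup.closure (S : Set (Equiv.Perm ℝ)) ↔ x ∈ PLSet (p ^ k) := fun x => by
    rw [← hS]; rfl
  have mT : ∀ x, x ∈ Subgroup.closure (T : Set (Equiv.Perm ℝ)) ↔ x ∈ PLSet p := fun x => by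
    rw [← hT]; rfl
  set q := p ^ k with hqd
  have hex : ∀ g, ∃ x, 1 ≤ g → g < q → Gen q 1 g x := by
    intro g
    by_cases h : 1 ≤ g ∧ g < q
    · obtain ⟨x, hx⟩ := exists_gen (d := 1) hq le_rfl h.1 h.2
      exact ⟨x, fun _ _ => hx⟩
    · exact ⟨1, fun h1 h2 => absurd ⟨h1, h2⟩ h⟩
  choose X hX using hex
  obtain ⟨Y, hY⟩ := exists_gen (q := q) (d := 2) (g := q - 1) hq (by norm_num) (by omega) (by omega)
  set l := wordLength (S : Set (Equiv.Perm ℝ)) with hl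
  let M := (Finset.range q).sup (fun g => l (X g)) + (Finset.range q).sup (fun g => l (X g)⁻¹) + l Y
  have C : Ctx q (Subgroup.closure (S : Set (Equiv.Perm ℝ))) l M X Y :=
    { hq := hq
      hH := hS
      hl := fun f hf g hg => wl_mul ((mS f).2 hf) ((mS g).2 hg)
      hX := hX
      hY := hY
      lX := fun g _ h => by
        have := Finset.le_sup (f := fun g => l (X g)) (Finset.mem_range.2 h)
        simp only [M] at *; omega
      lX' := fun g _ h => by
        have := Finset.le_sup (f := fun g => l (X g)⁻¹) (Finset.mem_range.2 h)
        simp only [M] at *; omega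
      lY := by simp only [M]; omega }
  obtain ⟨c, hc⟩ := fin_bound T (fun x => (Bf p x).card)
  have b : ∀ x ∈ PLSet p, (Bf p x).card ≤ c * wordLength (T : Set (Equiv.Perm ℝ)) x := by
    intro x hx
    refine wl_bound (m := fun x => (Bf p x).card) ?_ ?_ hc ((mT x).2 hx)
    · rw [Finset.card_eq_zero, Finset.eq_empty_iff_forall_notMem]
      intro I hI
      rw [mem_Bf (by rw [bad_one]; exact Set.finite_empty), bad_one] at hI
      exact hI
    · intro x hx y hy
      exact card_mul hp (PL_finite hp ((mT y).1 hy)) (PL_finite hp ((mT x).1 hx))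
  refine ⟨M * (3 * (c + c)), fun x hx => ?_⟩
  have h1 := C.bound wl_one (fun f hf => wl_inv ((mS f).2 hf)) hx
  have hxp := PL_pow_sub p k hx
  have hxi : x⁻¹ ∈ PLSet p := (mT _).1 (inv_mem ((mT x).2 hxp))
  have h2 := (card_pow hp hk hx).trans (b x hxp)
  have h3 := (card_pow hp hk (C.inv hx)).trans (b _ hxi)
  rw [wl_inv ((mT x).2 hxp)] at h3
  calc l x ≤ _ := h1
    _ ≤ M * (3 * (c * wordLength (T : Set (Equiv.Perm ℝ)) x + c * wordLength (T : Set (Equiv.Perm ℝ)) x)) := by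
        gcongr
    _ = _ := by ring

theorem main_upper {p k : ℕ} (S T : Finset (Equiv.Perm ℝ))
    (hS : ((Subgroup.closure (S : Set (Equiv.Perm ℝ)) : Subgroup (Equiv.Perm ℝ)) :
            Set (Equiv.Perm ℝ)) = PLSet (p ^ k))
    (hT : ((Subgroup.closure (T : Set (Equiv.Perm ℝ)) : Subgroup (Equiv.Perm ℝ)) :
            Set (Equiv.Perm ℝ)) = PLSet p) :
    ∃ C : ℕ, ∀ x ∈ PLSet (p ^ k), wordLength (T : Set (Equiv.Perm ℝ)) x ≤
      C * wordLength (S : Set (Equiv.Perm ℝ)) x := by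
  have hle : ∀ x, x ∈ Subgroup.closure (S : Set (Equiv.Perm ℝ)) →
      x ∈ Subgroup.closure (T : Set (Equiv.Perm ℝ)) := by
    intro x hx
    rw [← SetLike.mem_coe, hS] at hx
    rw [← SetLike.mem_coe, hT]
    exact PL_pow_sub p k hx
  obtain ⟨c, hc⟩ := fin_bound S (wordLength (T : Set (Equiv.Perm ℝ)))
  refine ⟨c, fun x hx => ?_⟩
  rw [← hS] at hx
  exact wl_bound wl_one (fun x hx y hy => wl_mul (hle x hx) (hle y hy)) hc hx
end PLT

/-- Theorem 7. For `p ≥ 2` and `k ≥ 1`, realizing `F(p)` and `F(p^k)` as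
groups of piecewise-linear homeomorphisms of `[0,1]`, `F(p^k)` is a subgroup of `F(p)`,
and the inclusion is a quasi-isometric embedding with respect to any finite generating
sets `S` of `F(p^k)` and `T` of `F(p)`. -/
theorem statement3 (p k : ℕ) (hp : 2 ≤ p) (hk : 1 ≤ k) :
    PLSet (p ^ k) ⊆ PLSet p ∧
      ∀ S T : Finset (Equiv.Perm ℝ),
        ((Subgroup.closure (S : Set (Equiv.Perm ℝ)) : Subgroup (Equiv.Perm ℝ)) :
            Set (Equiv.Perm ℝ)) = PLSet (p ^ k) →
        ((Subgroup.closure (T : Set (Equiv.Perm ℝ)) : Subgroup (Equiv.Perm ℝ)) :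
            Set (Equiv.Perm ℝ)) = PLSet p →
        ∃ C : ℝ, 1 ≤ C ∧ ∀ x ∈ PLSet (p ^ k),
          (1 / C) * (wordLength (S : Set (Equiv.Perm ℝ)) x : ℝ) ≤
              (wordLength (T : Set (Equiv.Perm ℝ)) x : ℝ) ∧
            (wordLength (T : Set (Equiv.Perm ℝ)) x : ℝ) ≤
              C * (wordLength (S : Set (Equiv.Perm ℝ)) x : ℝ) := by
  refine ⟨PLT.PL_pow_sub p k, fun S T hS hT => ?_⟩
  obtain ⟨a, ha⟩ := PLT.main_lower hp hk S T hS hT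
  obtain ⟨b, hb⟩ := PLT.main_upper S T hS hT
  have ha0 : (0 : ℝ) ≤ a := Nat.cast_nonneg a
  have hb0 : (0 : ℝ) ≤ b := Nat.cast_nonneg b
  refine ⟨1 + a + b, by linarith, fun x hx => ⟨?_, ?_⟩⟩
  · have h : (wordLength (S : Set (Equiv.Perm ℝ)) x : ℝ) ≤
        a * (wordLength (T : Set (Equiv.Perm ℝ)) x : ℝ) := by exact_mod_cast ha x hx
    have h0 : (0 : ℝ) ≤ wordLength (T : Set (Equiv.Perm ℝ)) x := Nat.cast_nonneg _
    rw [one_div, inv_mul_le_iff₀ (by linarith)]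
    nlinarith [mul_nonneg hb0 h0]
  · have h : (wordLength (T : Set (Equiv.Perm ℝ)) x : ℝ) ≤
        b * (wordLength (S : Set (Equiv.Perm ℝ)) x : ℝ) := by exact_mod_cast hb x hx
    have h0 : (0 : ℝ) ≤ wordLength (S : Set (Equiv.Perm ℝ)) x := Nat.cast_nonneg _
    nlinarith [mul_nonneg ha0 h0]
end
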